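/- arXiv:1106.5942 — 7 statements merged into one kernel-verified Lean document; each statement's English description precedes it below -/
import Mathlib

section
/- Let 𝒜 be a category, P a partially ordered set, and G a group, satisfying the amalgamation hypotheses (A1)–(A5) together with (A6): for each object y of 𝒜 and each m ∈ G there exists an isomorphism f : x ⟶ y (for some object x) with α(F(f)) = m. Then the prescription p · m = β(x), whenever f : x ⟶ β'(p) is an isomorphism in 𝒜 with α(F(f)) = m, is well defined — i.e. independent of the choice of such an isomorphism f — and defines a monotone right action of G on P: p · 1 = p, p · (m * n) = (p · m) · n, and p ≤ q implies p · m ≤ q · m. -/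
open CategoryTheory

universe u v w x

/-- Under the amalgamation hypotheses (A1)–(A6) for a category `𝒜`,
a poset `P` and a group `G`, the prescription `p · m = β x` whenever `f : x ≅ β' p`
is an isomorphism with `α (F f.hom) = m` is well defined and is a monotone right
action of `G` on `P`.

Here `F` is the faithful retraction of the inclusion `End(0) ↪ 𝒜` (A2), and `α`
is a monoid isomorphism from the endomorphism monoid of the weakly initial object
`0` (with multiplication `f * g = g ≫ f`) to `G` (A3); the preorder on objects is
`x ≤ y iff ∃ f : x ⟶ y, α (F f) = 1`. -/
theorem stmt2 {𝒜 : Type u} [Category.{v} 𝒜] {P : Type w} [PartialOrder P]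
    {G : Type x} [Group G]
    -- (A1): weakly initial object, unique up to isomorphism
    (O : 𝒜) (weakInit : ∀ y : 𝒜, Nonempty (O ⟶ y))
    (weakInitUnique : ∀ O' : 𝒜, (∀ y : 𝒜, Nonempty (O' ⟶ y)) → Nonempty (O ≅ O'))
    -- (A2): faithful retraction of the inclusion of the one-object category End(0)
    (F : ∀ {x y : 𝒜}, (x ⟶ y) → (O ⟶ O))
    (F_id : ∀ x : 𝒜, F (𝟙 x) = 𝟙 O)
    (F_comp : ∀ {x y z : 𝒜} (f : x ⟶ y) (g : y ⟶ z), F (f ≫ g) = F f ≫ F g)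
    (F_faithful : ∀ {x y : 𝒜} (f g : x ⟶ y), F f = F g → f = g)
    (F_retraction : ∀ f : O ⟶ O, F f = f)
    -- (A3): a monoid isomorphism α : End(0) → G
    (α : (O ⟶ O) → G) (α_bij : Function.Bijective α)
    (α_one : α (𝟙 O) = 1)
    (α_mul : ∀ f g : O ⟶ O, α (f ≫ g) = α g * α f)
    -- (A4): an equivalence of preorders between (Ob 𝒜, ≤) and P
    (β : 𝒜 → P) (β' : P → 𝒜)
    (β_mono : ∀ x y : 𝒜, (∃ f : x ⟶ y, α (F f) = 1) → β x ≤ β y)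
    (β'_mono : ∀ p q : P, p ≤ q → ∃ f : β' p ⟶ β' q, α (F f) = 1)
    (β_β' : ∀ p : P, β (β' p) = p)
    (β'_β_le : ∀ x : 𝒜, ∃ f : β' (β x) ⟶ x, α (F f) = 1)
    (le_β'_β : ∀ x : 𝒜, ∃ f : x ⟶ β' (β x), α (F f) = 1)
    -- (A5)
    (A5 : ∀ x : 𝒜, ∃ f : x ≅ β' (β x), α (F f.hom) = 1)
    -- (A6)
    (A6 : ∀ (y : 𝒜) (m : G), ∃ (x : 𝒜) (f : x ≅ y), α (F f.hom) = m) :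
    ∃ act : P → G → P,
      (∀ (p : P) (m : G) (x : 𝒜) (f : x ≅ β' p), α (F f.hom) = m → act p m = β x) ∧
      (∀ p : P, act p 1 = p) ∧
      (∀ (p : P) (m n : G), act p (m * n) = act (act p m) n) ∧
      (∀ (m : G) (p q : P), p ≤ q → act p m ≤ act q m) := by
  have inv : ∀ {x y : 𝒜} (f : x ≅ y), α (F f.inv) = (α (F f.hom))⁻¹ := by
    intro x y f
    apply eq_inv_of_mul_eq_one_left
    rw [← α_mul, ← F_comp, f.hom_inv_id, F_id, α_one]
  have key : ∀ (p q : P) (m : G) (x y : 𝒜) (f : x ≅ β' p) (g : y ≅ β' q),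
      p ≤ q → α (F f.hom) = m → α (F g.hom) = m → β x ≤ β y := by
    intro p q m x y f g hpq hf hg
    obtain ⟨k, hk⟩ := β'_mono p q hpq
    refine β_mono x y ⟨f.hom ≫ k ≫ g.inv, ?_⟩
    rw [F_comp, F_comp, α_mul, α_mul, inv, hf, hg, hk]
    simp
  choose X φ hφ using fun (p : P) (m : G) => A6 (β' p) m
  have wd : ∀ (p : P) (m : G) (x : 𝒜) (f : x ≅ β' p), α (F f.hom) = m → β (X p m) = β x :=
    fun p m x f hf => le_antisymm
      (key p p m _ _ (φ p m) f le_rfl (hφ p m) hf)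
      (key p p m _ _ f (φ p m) le_rfl hf (hφ p m))
  refine ⟨fun p m => β (X p m), wd, ?_, ?_, ?_⟩
  · intro p
    exact (wd p 1 (β' p) (Iso.refl _) (by rw [Iso.refl_hom, F_id, α_one])).trans (β_β' p)
  · intro p m n
    obtain ⟨h, hh⟩ := A5 (X p m)
    refine wd p (m * n) _ (φ (β (X p m)) n ≪≫ h.symm ≪≫ φ p m) ?_
    rw [Iso.trans_hom, Iso.trans_hom, Iso.symm_hom, F_comp, F_comp, α_mul, α_mul, inv, hh,
      hφ, hφ]
    simp
  · intro m p q hpq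
    exact key p q m _ _ (φ p m) (φ q m) hpq (hφ p m) (hφ q m)
end

section
/- Let 𝒜 be a category, P a partially ordered set, and G a group, satisfying the amalgamation hypotheses (A1)–(A5) together with (A6): for each object y of 𝒜 and each m ∈ G there exists an isomorphism f : x ⟶ y (for some object x) with α(F(f)) = m. Then there is a monotone right action of G on P (namely p · m = β(x) for any isomorphism f : x ⟶ β'(p) with α(F(f)) = m) such that the assignment x ↦ β(x) on objects and f ↦ α(F(f)) on morphisms is a well-defined functor from 𝒜 to the Grothendieck category P ⋊ G, and this functor is full, faithful, and essentially surjective, i.e. an equivalence of categories. -/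
open CategoryTheory

universe u v w x

/-- A monotone right action of a monoid `M` on a poset `P`. -/
structure RightAction (M : Type x) (P : Type w) [Monoid M] [PartialOrder P] where
  act : P → M → P
  act_one : ∀ p, act p 1 = p
  act_mul : ∀ p m n, act p (m * n) = act (act p m) n
  act_mono : ∀ (m : M) ⦃p q : P⦄, p ≤ q → act p m ≤ act q m

/-- Objects of the Grothendieck category `P ⋊ M`: the elements of `P`; a morphism
`p ⟶ q` is an element `m : M` with `p ≤ q · m`; identities are `1` and the composite
of `m : p ⟶ q` followed by `n : q ⟶ r` is `n * m`. -/
structure Groth {M : Type x} {P : Type w} [Monoid M] [PartialOrder P]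
    (ρ : RightAction M P) : Type w where
  pt : P

instance {M : Type x} {P : Type w} [Monoid M] [PartialOrder P] (ρ : RightAction M P) :
    Category.{x} (Groth ρ) where
  Hom p q := { m : M // p.pt ≤ ρ.act q.pt m }
  id p := ⟨1, (ρ.act_one p.pt).ge⟩
  comp {p q r} m n :=
    ⟨n.1 * m.1, by rw [ρ.act_mul]; exact le_trans m.2 (ρ.act_mono m.1 n.2)⟩
  id_comp f := Subtype.ext (mul_one _)
  comp_id f := Subtype.ext (one_mul _)
  assoc f g h := Subtype.ext (mul_assoc _ _ _).symm

/-- Under the amalgamation hypotheses (A1)–(A6) for a category `𝒜`, a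
poset `P` and a group `G`, there is a monotone right action of `G` on `P` (given by
`p · m = β x` for any isomorphism `f : x ≅ β' p` with `α (F f.hom) = m`) such that
`x ↦ β x`, `f ↦ α (F f)` is a well-defined functor from `𝒜` to the Grothendieck
category `P ⋊ G`, and this functor is full, faithful and essentially surjective,
i.e. an equivalence of categories. -/
theorem stmt3 {𝒜 : Type u} [Category.{v} 𝒜] {P : Type w} [PartialOrder P]
    {G : Type x} [Group G]
    -- (A1): weakly initial object, unique up to isomorphism
    (O : 𝒜) (weakInit : ∀ y : 𝒜, Nonempty (O ⟶ y))
    (weakInitUnique : ∀ O' : 𝒜, (∀ y : 𝒜, Nonempty (O' ⟶ y)) → Nonempty (O ≅ O'))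
    -- (A2): faithful retraction of the inclusion of the one-object category End(0)
    (F : ∀ {x y : 𝒜}, (x ⟶ y) → (O ⟶ O))
    (F_id : ∀ x : 𝒜, F (𝟙 x) = 𝟙 O)
    (F_comp : ∀ {x y z : 𝒜} (f : x ⟶ y) (g : y ⟶ z), F (f ≫ g) = F f ≫ F g)
    (F_faithful : ∀ {x y : 𝒜} (f g : x ⟶ y), F f = F g → f = g)
    (F_retraction : ∀ f : O ⟶ O, F f = f)
    -- (A3): a monoid isomorphism α : End(0) → G
    (α : (O ⟶ O) → G) (α_bij : Function.Bijective α)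
    (α_one : α (𝟙 O) = 1)
    (α_mul : ∀ f g : O ⟶ O, α (f ≫ g) = α g * α f)
    -- (A4): an equivalence of preorders between (Ob 𝒜, ≤) and P
    (β : 𝒜 → P) (β' : P → 𝒜)
    (β_mono : ∀ x y : 𝒜, (∃ f : x ⟶ y, α (F f) = 1) → β x ≤ β y)
    (β'_mono : ∀ p q : P, p ≤ q → ∃ f : β' p ⟶ β' q, α (F f) = 1)
    (β_β' : ∀ p : P, β (β' p) = p)
    (β'_β_le : ∀ x : 𝒜, ∃ f : β' (β x) ⟶ x, α (F f) = 1)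
    (le_β'_β : ∀ x : 𝒜, ∃ f : x ⟶ β' (β x), α (F f) = 1)
    -- (A5)
    (A5 : ∀ x : 𝒜, ∃ f : x ≅ β' (β x), α (F f.hom) = 1)
    -- (A6)
    (A6 : ∀ (y : 𝒜) (m : G), ∃ (x : 𝒜) (f : x ≅ y), α (F f.hom) = m) :
    ∃ ρ : RightAction G P,
      (∀ (p : P) (m : G) (x : 𝒜) (f : x ≅ β' p), α (F f.hom) = m → ρ.act p m = β x) ∧
      ∃ Φ : 𝒜 ⥤ Groth ρ,
        (∀ x : 𝒜, (Φ.obj x).pt = β x) ∧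
        (∀ (x y : 𝒜) (f : x ⟶ y), ((Φ.map f).1 : G) = α (F f)) ∧
        Φ.Full ∧ Φ.Faithful ∧ Φ.EssSurj := by
  have hid : ∀ x : 𝒜, α (F (𝟙 x)) = 1 := fun x => by rw [F_id, α_one]
  have hcomp : ∀ {x y z : 𝒜} (f : x ⟶ y) (g : y ⟶ z),
      α (F (f ≫ g)) = α (F g) * α (F f) := fun f g => by rw [F_comp, α_mul]
  have hinv : ∀ {x y : 𝒜} (f : x ≅ y), α (F f.inv) = (α (F f.hom))⁻¹ := fun f => by
    rw [eq_inv_iff_mul_eq_one, ← hcomp, f.hom_inv_id, hid]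
  have key : ∀ {x y x' : 𝒜} (f : x ⟶ y) (i : x' ≅ y),
      α (F f) = α (F i.hom) → β x ≤ β x' := fun {x y x'} f i h =>
    β_mono _ _ ⟨f ≫ i.inv, by rw [hcomp, hinv, h, inv_mul_cancel]⟩
  choose X I hI using A6
  have spec : ∀ (p : P) (m : G) (x : 𝒜) (f : x ≅ β' p), α (F f.hom) = m →
      β (X (β' p) m) = β x := fun p m x f h =>
    le_antisymm (key (I (β' p) m).hom f (by rw [hI, h])) (key f.hom (I (β' p) m) (by rw [hI, h]))
  let ρ : RightAction G P :=
    { act := fun p m => β (X (β' p) m)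
      act_one := fun p => by
        rw [spec p 1 (β' p) (Iso.refl _) (hid _), β_β']
      act_mul := fun p m n => by
        obtain ⟨j, hj⟩ := A5 (X (β' p) m)
        refine spec p (m * n) _ (I (β' (β (X (β' p) m))) n ≪≫ j.symm ≪≫ I (β' p) m) ?_
        simp only [Iso.trans_hom, Iso.symm_hom, hcomp, hinv, hj, hI, inv_one, mul_one]
      act_mono := fun m p q h => by
        obtain ⟨g, hg⟩ := β'_mono p q h
        refine key ((I (β' p) m).hom ≫ g) (I (β' q) m) ?_
        rw [hcomp, hg, hI, hI, one_mul] }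
  have hmap : ∀ {x y : 𝒜} (f : x ⟶ y), β x ≤ ρ.act (β y) (α (F f)) := fun {x y} f => by
    obtain ⟨j, hj⟩ := A5 y
    refine key (f ≫ j.hom) (I (β' (β y)) (α (F f))) ?_
    rw [hcomp, hj, hI, one_mul]
  have hfull : ∀ (x y : 𝒜) (m : G), β x ≤ ρ.act (β y) m → ∃ f : x ⟶ y, α (F f) = m := by
    intro x y m h
    obtain ⟨a, ha⟩ := le_β'_β x
    obtain ⟨b, hb⟩ := β'_mono _ _ h
    obtain ⟨c, hc⟩ := β'_β_le (X (β' (β y)) m)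
    obtain ⟨d, hd⟩ := β'_β_le y
    refine ⟨a ≫ b ≫ c ≫ (I (β' (β y)) m).hom ≫ d, ?_⟩
    simp only [hcomp, ha, hb, hc, hd, hI, one_mul, mul_one]
  let Φ : 𝒜 ⥤ Groth ρ :=
    { obj := fun x => ⟨β x⟩
      map := fun f => ⟨α (F f), hmap f⟩
      map_id := fun x => Subtype.ext (hid x)
      map_comp := fun f g => Subtype.ext (hcomp f g) }
  refine ⟨ρ, spec, Φ, fun _ => rfl, fun _ _ _ => rfl, ⟨?_⟩, ⟨?_⟩, ⟨?_⟩⟩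
  · intro x y g
    obtain ⟨f, hf⟩ := hfull x y g.1 g.2
    exact ⟨f, Subtype.ext hf⟩
  · intro x y f g h
    exact F_faithful f g (α_bij.1 (congrArg Subtype.val h))
  · intro p
    refine ⟨β' p.pt, ⟨eqToIso ?_⟩⟩
    change (⟨β (β' p.pt)⟩ : Groth ρ) = p
    rw [β_β']
end

section
/- For every natural number n, the map sending an equivalence relation p on Fin n to the set {x : Fin n → ℂ | ∀ i j, p i j → x i = x j} is a bijection from Setoid (Fin n) onto the set of unital star-subalgebras of the C*-algebra Fin n → ℂ (pointwise operations, pointwise complex conjugation as star), and it is order-reversing in both directions: p ≤ q if and only if the subalgebra associated to q is contained in the subalgebra associated to p. In particular, the poset of unital star-subalgebras of ℂⁿ ordered by inclusion is order-isomorphic to the order dual of the partition lattice P(n). -/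
universe u

/-- The unital star-subalgebra of `Fin n → ℂ` associated to a partition
(equivalence relation) `p` of `Fin n`: the functions constant on the blocks of `p`. -/
def partitionSubalgebra (n : ℕ) (p : Setoid (Fin n)) : StarSubalgebra ℂ (Fin n → ℂ) where
  carrier := {x : Fin n → ℂ | ∀ i j : Fin n, p i j → x i = x j}
  mul_mem' := fun {a b} ha hb i j h => by simp only [Pi.mul_apply, ha i j h, hb i j h]
  add_mem' := fun {a b} ha hb i j h => by simp only [Pi.add_apply, ha i j h, hb i j h]
  one_mem' := fun i j _ => rfl
  zero_mem' := fun i j _ => rfl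
  algebraMap_mem' := fun c i j _ => rfl
  star_mem' := fun {a} ha i j h => by simp only [Pi.star_apply, ha i j h]

theorem exists_block_indicator (n : ℕ) (S : StarSubalgebra ℂ (Fin n → ℂ)) (i : Fin n) :
    ∃ e ∈ S, e i = 1 ∧ ∀ k, (∃ x ∈ S, x i ≠ x k) → e k = 0 := by
  classical
  have h : ∀ j : Fin n, ∃ f ∈ S, f i = 1 ∧ ((∃ x ∈ S, x i ≠ x j) → f j = 0) := by
    intro j
    by_cases hj : ∃ x ∈ S, x i ≠ x j
    · obtain ⟨x, hx, hne⟩ := hj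
      refine ⟨(x i - x j)⁻¹ • (x - algebraMap ℂ (Fin n → ℂ) (x j)), ?_, ?_, ?_⟩
      · exact S.smul_mem (sub_mem hx (S.algebraMap_mem _)) _
      · have : x i - x j ≠ 0 := sub_ne_zero.mpr hne
        simp [this]
      · intro _
        simp
    · exact ⟨1, one_mem S, rfl, fun h => absurd h hj⟩
  choose f hf h1 h0 using h
  refine ⟨∏ j, f j, prod_mem fun j _ => hf j, ?_, ?_⟩
  · simp [Finset.prod_apply, h1]
  · intro k hk
    rw [Finset.prod_apply]
    exact Finset.prod_eq_zero (Finset.mem_univ k) (h0 k hk)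

theorem partitionSubalgebra_surjective (n : ℕ) :
    Function.Surjective (partitionSubalgebra n) := by
  classical
  intro S
  let p : Setoid (Fin n) :=
    { r := fun i j => ∀ x ∈ S, x i = x j
      iseqv := ⟨fun _ _ _ => rfl, fun h x hx => (h x hx).symm,
        fun h h' x hx => (h x hx).trans (h' x hx)⟩ }
  refine ⟨p, le_antisymm ?_ ?_⟩
  · intro x hx
    have hx' : ∀ i j : Fin n, p i j → x i = x j := hx
    choose e heS he1 he0 using exists_block_indicator n S
    have key : x = ∑ q : Quotient p, x q.out • e q.out := by
      funext k
      rw [Finset.sum_apply, Finset.sum_eq_single (Quotient.mk p k)]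
      · have hk : p (Quotient.mk p k).out k := Quotient.mk_out k
        have h1 : e (Quotient.mk p k).out k = 1 := by
          rw [← he1 (Quotient.mk p k).out]
          exact (hk _ (heS _)).symm
        simp [h1, hx' _ _ hk]
      · intro q _ hq
        have : e q.out k = 0 := by
          apply he0
          by_contra hcon
          push Not at hcon
          apply hq
          rw [← Quotient.out_eq q]
          exact Quotient.sound hcon
        simp [this]
      · simp
    rw [key]
    exact sum_mem fun q _ => S.smul_mem (heS _) _
  · intro x hx i j hij
    exact hij x hx

theorem partitionSubalgebra_le_iff (n : ℕ) (p q : Setoid (Fin n)) :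
    p ≤ q ↔ partitionSubalgebra n q ≤ partitionSubalgebra n p := by
  classical
  constructor
  · intro h x hx i j hij
    exact hx i j (h hij)
  · intro h i j hij
    have hmem : (fun k => if q i k then (1 : ℂ) else 0) ∈ partitionSubalgebra n q := by
      intro a b hab
      have : q i a ↔ q i b := ⟨fun h => q.trans h hab, fun h => q.trans h (q.symm hab)⟩
      simp only [this]
    have h2 := h hmem i j hij
    by_contra hcon
    have hcon' : ¬ q i j := hcon
    simp [q.refl i, hcon'] at h2

/-- For every natural number `n`, the map sending an equivalence
relation `p` on `Fin n` to `{x : Fin n → ℂ | ∀ i j, p i j → x i = x j}` is a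
bijection from `Setoid (Fin n)` onto the unital star-subalgebras of the
C*-algebra `Fin n → ℂ`, and it is order-reversing in both directions:
`p ≤ q ↔ partitionSubalgebra n q ≤ partitionSubalgebra n p`.  In particular, the
poset of unital star-subalgebras of `ℂⁿ` under inclusion is order-isomorphic to
the order dual of the partition lattice `P(n) = Setoid (Fin n)`. -/
theorem stmt4 (n : ℕ) :
    Function.Bijective (partitionSubalgebra n) ∧
    (∀ p q : Setoid (Fin n),
      p ≤ q ↔ partitionSubalgebra n q ≤ partitionSubalgebra n p) ∧
    Nonempty ((Setoid (Fin n))ᵒᵈ ≃o StarSubalgebra ℂ (Fin n → ℂ)) := by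
  have hinj : Function.Injective (partitionSubalgebra n) := fun p q h =>
    le_antisymm ((partitionSubalgebra_le_iff n p q).2 h.ge)
      ((partitionSubalgebra_le_iff n q p).2 h.le)
  have hbij : Function.Bijective (partitionSubalgebra n) :=
    ⟨hinj, partitionSubalgebra_surjective n⟩
  refine ⟨hbij, partitionSubalgebra_le_iff n, ⟨?_⟩⟩
  exact
    { toEquiv := OrderDual.ofDual.trans (Equiv.ofBijective _ hbij)
      map_rel_iff' := fun {a b} =>
        (partitionSubalgebra_le_iff n (OrderDual.ofDual b) (OrderDual.ofDual a)).symm }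
end

section
/- Let ι be a nonempty finite type, let (A i) be a family of nontrivial unital C*-algebras indexed by ι, and for each i let D i be a commutative unital closed star-subalgebra of A i that is weakly terminal, i.e. every commutative unital closed star-subalgebra of A i admits an injective unital star-algebra homomorphism into D i. Then the product subalgebra Π i, D i is a commutative unital closed star-subalgebra of the product C*-algebra Π i, A i (with pointwise operations and supremum norm), and it is weakly terminal: every commutative unital closed star-subalgebra C of Π i, A i admits an injective unital star-algebra homomorphism into Π i, D i. -/
universe u v

/-- A commutative unital closed star-subalgebra of `A`, bundled with an injectivity
category structure elsewhere; here only the data is needed. -/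
structure CommSub (A : Type u) [Ring A] [StarRing A] [Algebra ℂ A] [StarModule ℂ A]
    [TopologicalSpace A] : Type u where
  sub : StarSubalgebra ℂ A
  comm : ∀ x ∈ sub, ∀ y ∈ sub, x * y = y * x
  closed : IsClosed (sub : Set A)

/-- The product `Π i, S i` of a family of star-subalgebras, as a star-subalgebra of
the product algebra `Π i, A i`. -/
def piStarSubalgebra {ι : Type v} {A : ι → Type u}
    [∀ i, Ring (A i)] [∀ i, StarRing (A i)] [∀ i, Algebra ℂ (A i)]
    [∀ i, StarModule ℂ (A i)]
    (S : ∀ i, StarSubalgebra ℂ (A i)) : StarSubalgebra ℂ (∀ i, A i) where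
  carrier := {x | ∀ i, x i ∈ S i}
  mul_mem' := fun {a b} ha hb i => mul_mem (ha i) (hb i)
  add_mem' := fun {a b} ha hb i => add_mem (ha i) (hb i)
  one_mem' := fun i => one_mem (S i)
  zero_mem' := fun i => zero_mem (S i)
  algebraMap_mem' := fun c i => (S i).algebraMap_mem c
  star_mem' := fun {a} ha i => star_mem (ha i)

/-- Let `ι` be a nonempty finite type, `A i` nontrivial unital
C*-algebras, and `D i` a weakly terminal commutative unital closed star-subalgebra
of `A i` for each `i`.  Then `Π i, D i` is a commutative unital closed
star-subalgebra of the product C*-algebra `Π i, A i`, and it is weakly terminal: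
every commutative unital closed star-subalgebra `C` of `Π i, A i` admits an
injective unital star-algebra homomorphism into `Π i, D i`. -/
theorem stmt7 {ι : Type v} [Finite ι] [Nonempty ι]
    {A : ι → Type u}
    [∀ i, NormedRing (A i)] [∀ i, StarRing (A i)] [∀ i, CStarRing (A i)]
    [∀ i, CompleteSpace (A i)] [∀ i, NormedAlgebra ℂ (A i)] [∀ i, StarModule ℂ (A i)]
    [∀ i, Nontrivial (A i)]
    (D : ∀ i, CommSub (A i))
    (hD : ∀ (i : ι) (C : CommSub (A i)),
      ∃ f : C.sub →⋆ₐ[ℂ] (D i).sub, Function.Injective f) :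
    (∀ x ∈ piStarSubalgebra (fun i => (D i).sub),
      ∀ y ∈ piStarSubalgebra (fun i => (D i).sub), x * y = y * x) ∧
    IsClosed ((piStarSubalgebra (fun i => (D i).sub) : Set (∀ i, A i))) ∧
    (∀ C : CommSub (∀ i, A i),
      ∃ f : C.sub →⋆ₐ[ℂ] piStarSubalgebra (fun i => (D i).sub),
        Function.Injective f) := by
  refine ⟨?_, ?_, ?_⟩
  · intro x hx y hy
    funext i
    exact (D i).comm _ (hx i) _ (hy i)
  · have h : ((piStarSubalgebra (fun i => (D i).sub) : Set (∀ i, A i)))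
        = ⋂ i, (fun x : ∀ i, A i => x i) ⁻¹' ((D i).sub : Set (A i)) := by
      ext x
      simp only [Set.mem_iInter]
      exact Iff.rfl
    rw [h]
    exact isClosed_iInter fun i => (D i).closed.preimage (continuous_apply i)
  · intro C
    -- the closure of the i-th projection of `C`
    let S : ∀ i, StarSubalgebra ℂ (A i) := fun i => C.sub.map (Pi.evalStarAlgHom ℂ A i)
    have hS : ∀ i, ∀ x ∈ S i, ∀ y ∈ S i, x * y = y * x := by
      rintro i _ ⟨a, ha, rfl⟩ _ ⟨b, hb, rfl⟩
      exact congrFun (C.comm a ha b hb) i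
    let E : ∀ i, CommSub (A i) := fun i =>
      { sub := (S i).topologicalClosure
        closed := (S i).isClosed_topologicalClosure
        comm := by
          have h1 : ∀ x ∈ S i, ∀ y ∈ closure (S i : Set (A i)), x * y = y * x := by
            intro x hx
            exact closure_minimal (t := {y | x * y = y * x}) (fun y hy => hS i x hx y hy)
              (isClosed_eq (by fun_prop) (by fun_prop))
          intro x hx y hy
          exact closure_minimal (t := {x | x * y = y * x}) (fun x hx => h1 x hx y hy)
            (isClosed_eq (by fun_prop) (by fun_prop)) hx }
    choose f hf using fun i => hD i (E i)
    have hmem : ∀ (c : C.sub) (i : ι), c.1 i ∈ (E i).sub := fun c i =>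
      subset_closure ⟨c.1, c.2, rfl⟩
    refine ⟨{ toFun := fun c => ⟨fun i => (f i ⟨c.1 i, hmem c i⟩ : A i),
                fun i => (f i ⟨c.1 i, hmem c i⟩).2⟩
              map_one' := ?_
              map_mul' := ?_
              map_zero' := ?_
              map_add' := ?_
              commutes' := ?_
              map_star' := ?_ }, ?_⟩
    · apply Subtype.ext; funext i
      exact congrArg Subtype.val (map_one (f i))
    · intro a b
      apply Subtype.ext; funext i
      exact congrArg Subtype.val (map_mul (f i) ⟨a.1 i, hmem a i⟩ ⟨b.1 i, hmem b i⟩)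
    · apply Subtype.ext; funext i
      exact congrArg Subtype.val (map_zero (f i))
    · intro a b
      apply Subtype.ext; funext i
      exact congrArg Subtype.val (map_add (f i) ⟨a.1 i, hmem a i⟩ ⟨b.1 i, hmem b i⟩)
    · intro r
      apply Subtype.ext; funext i
      exact congrArg Subtype.val (AlgHomClass.commutes (f i) r)
    · intro a
      apply Subtype.ext; funext i
      exact congrArg Subtype.val (map_star (f i) ⟨a.1 i, hmem a i⟩)
    · intro a b hab
      apply Subtype.ext; funext i
      have h := congrFun (congrArg Subtype.val hab) i
      exact congrArg Subtype.val (hf i (Subtype.ext h))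
end

section
/- Let 𝒜 be a category, P a partially ordered set, and M a monoid, satisfying the amalgamation hypotheses (A1)–(A5) together with: (A6') for each object y of 𝒜 and each m ∈ M there is a morphism f : x ⟶ y with α(F(f)) = m which is universal, meaning that every f' : x' ⟶ y with α(F(f')) = m factors as f' = f ∘ g for some morphism g with α(F(g)) = 1; and (A7') every morphism f of 𝒜 with α(F(f)) = n * m factors as f = g ∘ h with α(F(h)) = m and α(F(g)) = n. Then there is a monotone right action of M on P — given by p · m = β(x) whenever f : x ⟶ β'(p) is a universal morphism with α(F(f)) = m in the sense of (A6') — such that the assignment x ↦ β(x) on objects and f ↦ α(F(f)) on morphisms is a well-defined functor from 𝒜 to P ⋊ M which is full, faithful, and essentially surjective, i.e. an equivalence of categories. -/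
open CategoryTheory

universe u v w x

/-- Under the amalgamation hypotheses (A1')--(A5') together with (A6')
(existence of universal morphisms with prescribed image in `M`) and (A7')
(factorization), for a category `𝒜`, a poset `P` and a monoid `M`, there is a
monotone right action of `M` on `P` (given by `p · m = β x` whenever `f : x ⟶ β' p`
is a universal morphism with `α (F f) = m`) such that `x ↦ β x`, `f ↦ α (F f)` is a
well-defined functor from `𝒜` to the Grothendieck category `P ⋊ M`, and this functor
is full, faithful and essentially surjective, i.e. an equivalence of categories. -/
theorem stmt10 {𝒜 : Type u} [Category.{v} 𝒜] {P : Type w} [PartialOrder P]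
    {M : Type x} [Monoid M]
    -- (A1): weakly initial object, unique up to isomorphism
    (O : 𝒜) (weakInit : ∀ y : 𝒜, Nonempty (O ⟶ y))
    (weakInitUnique : ∀ O' : 𝒜, (∀ y : 𝒜, Nonempty (O' ⟶ y)) → Nonempty (O ≅ O'))
    -- (A2): faithful retraction of the inclusion of the one-object category End(0)
    (F : ∀ {x y : 𝒜}, (x ⟶ y) → (O ⟶ O))
    (F_id : ∀ x : 𝒜, F (𝟙 x) = 𝟙 O)
    (F_comp : ∀ {x y z : 𝒜} (f : x ⟶ y) (g : y ⟶ z), F (f ≫ g) = F f ≫ F g)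
    (F_faithful : ∀ {x y : 𝒜} (f g : x ⟶ y), F f = F g → f = g)
    (F_retraction : ∀ f : O ⟶ O, F f = f)
    -- (A3): a monoid isomorphism α : End(0) → G
    (α : (O ⟶ O) → M) (α_bij : Function.Bijective α)
    (α_one : α (𝟙 O) = 1)
    (α_mul : ∀ f g : O ⟶ O, α (f ≫ g) = α g * α f)
    -- (A4): an equivalence of preorders between (Ob 𝒜, ≤) and P
    (β : 𝒜 → P) (β' : P → 𝒜)
    (β_mono : ∀ x y : 𝒜, (∃ f : x ⟶ y, α (F f) = 1) → β x ≤ β y)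
    (β'_mono : ∀ p q : P, p ≤ q → ∃ f : β' p ⟶ β' q, α (F f) = 1)
    (β_β' : ∀ p : P, β (β' p) = p)
    (β'_β_le : ∀ x : 𝒜, ∃ f : β' (β x) ⟶ x, α (F f) = 1)
    (le_β'_β : ∀ x : 𝒜, ∃ f : x ⟶ β' (β x), α (F f) = 1)
    -- (A5)
    (A5 : ∀ x : 𝒜, ∃ f : x ≅ β' (β x), α (F f.hom) = 1)
    -- (A6'): universal morphisms with prescribed image in M
    (A6' : ∀ (y : 𝒜) (m : M), ∃ (x : 𝒜) (f : x ⟶ y), α (F f) = m ∧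
      ∀ (x' : 𝒜) (f' : x' ⟶ y), α (F f') = m →
        ∃ g : x' ⟶ x, α (F g) = 1 ∧ f' = g ≫ f)
    -- (A7'): factorization of morphisms along factorizations in M
    (A7' : ∀ (x y : 𝒜) (f : x ⟶ y) (m n : M), α (F f) = n * m →
      ∃ (z : 𝒜) (h : x ⟶ z) (g : z ⟶ y), α (F h) = m ∧ α (F g) = n ∧ f = h ≫ g) :
    ∃ ρ : RightAction M P,
      (∀ (p : P) (m : M) (x : 𝒜) (f : x ⟶ β' p), α (F f) = m →
        (∀ (x' : 𝒜) (f' : x' ⟶ β' p), α (F f') = m →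
          ∃ g : x' ⟶ x, α (F g) = 1 ∧ f' = g ≫ f) →
        ρ.act p m = β x) ∧
      ∃ Φ : 𝒜 ⥤ Groth ρ,
        (∀ x : 𝒜, (Φ.obj x).pt = β x) ∧
        (∀ (x y : 𝒜) (f : x ⟶ y), ((Φ.map f).1 : M) = α (F f)) ∧
        Φ.Full ∧ Φ.Faithful ∧ Φ.EssSurj := by
  obtain ⟨H, hH⟩ : ∃ H : 𝒜 → 𝒜 → M → Prop,
      ∀ x y m, H x y m ↔ ∃ f : x ⟶ y, α (F f) = m := ⟨_, fun _ _ _ => Iff.rfl⟩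
  have Hc : ∀ {x y z m n}, H x y m → H y z n → H x z (n * m) := by
    intro x y z m n h k
    obtain ⟨f, rfl⟩ := (hH _ _ _).1 h
    obtain ⟨g, rfl⟩ := (hH _ _ _).1 k
    exact (hH _ _ _).2 ⟨f ≫ g, by rw [F_comp, α_mul]⟩
  have Hl : ∀ {x y z m}, H x y 1 → H y z m → H x z m := by
    intro x y z m h k
    simpa using Hc h k
  have Hr : ∀ {x y z m}, H x y m → H y z 1 → H x z m := by
    intro x y z m h k
    simpa using Hc h k
  have b1 : ∀ x, H (β' (β x)) x 1 := fun x => (hH _ _ _).2 (β'_β_le x)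
  have b2 : ∀ x, H x (β' (β x)) 1 := fun x => (hH _ _ _).2 (le_β'_β x)
  have Hle : ∀ x y, H x y 1 ↔ β x ≤ β y := by
    intro x y
    constructor
    · intro h
      exact β_mono _ _ ((hH _ _ _).1 h)
    · intro h
      exact Hl (b2 x) (Hr ((hH _ _ _).2 (β'_mono _ _ h)) (b1 y))
  choose U u hu hU using A6'
  have HU : ∀ x y m, H x y m ↔ H x (U y m) 1 := by
    intro x y m
    constructor
    · intro h
      obtain ⟨f, hf⟩ := (hH _ _ _).1 h
      obtain ⟨g, hg, -⟩ := hU y m x f hf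
      exact (hH _ _ _).2 ⟨g, hg⟩
    · intro h
      exact Hl h ((hH _ _ _).2 ⟨u y m, hu y m⟩)
  have key : ∀ x p m, β x ≤ β (U (β' p) m) ↔ H x (β' p) m := by
    intro x p m
    rw [HU, Hle]
  have key1 : ∀ q p m, q ≤ β (U (β' p) m) ↔ H (β' q) (β' p) m := by
    intro q p m
    rw [← key, β_β']
  have key2 : ∀ x y m, β x ≤ β (U (β' (β y)) m) ↔ H x y m := by
    intro x y m
    rw [key]
    exact ⟨fun h => Hr h (b1 y), fun h => Hr h (b2 y)⟩
  let ρ : RightAction M P :=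
    { act := fun p m => β (U (β' p) m)
      act_one := by
        intro p
        refine eq_of_forall_le_iff fun q => ?_
        rw [key1, Hle, β_β', β_β']
      act_mul := by
        intro p m n
        refine eq_of_forall_le_iff fun q => ?_
        rw [key1, key1]
        constructor
        · intro h
          obtain ⟨f, hf⟩ := (hH _ _ _).1 h
          obtain ⟨z, k, g, hk, hg, -⟩ := A7' _ _ f n m hf
          have h1 : H z (β' p) m := (hH _ _ _).2 ⟨g, hg⟩
          exact Hr (Hr ((hH _ _ _).2 ⟨k, hk⟩) ((HU _ _ _).1 h1)) (b2 _)
        · intro h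
          exact Hc h (Hl (b1 _) ((hH _ _ _).2 ⟨_, hu _ _⟩))
      act_mono := by
        intro m p q hpq
        rw [key]
        exact Hr ((hH _ _ _).2 ⟨_, hu _ _⟩) ((hH _ _ _).2 (β'_mono _ _ hpq)) }
  refine ⟨ρ, ?_, ?_⟩
  · intro p m x f hf huniv
    refine eq_of_forall_le_iff fun q => ?_
    change q ≤ β (U (β' p) m) ↔ _
    rw [key1]
    constructor
    · intro h
      obtain ⟨f', hf'⟩ := (hH _ _ _).1 h
      obtain ⟨g, hg, -⟩ := huniv _ f' hf'
      have := (Hle _ _).1 ((hH _ _ _).2 ⟨g, hg⟩)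
      rwa [β_β'] at this
    · intro h
      have h1 : H (β' q) x 1 := (Hle _ _).2 (by rwa [β_β'])
      exact Hl h1 ((hH _ _ _).2 ⟨f, hf⟩)
  · let Φ : 𝒜 ⥤ Groth ρ :=
      { obj := fun x => ⟨β x⟩
        map := fun {x y} f => ⟨α (F f), (key2 x y _).2 ((hH _ _ _).2 ⟨f, rfl⟩)⟩
        map_id := fun x => Subtype.ext ((congrArg α (F_id x)).trans α_one)
        map_comp := fun f g => Subtype.ext ((congrArg α (F_comp f g)).trans (α_mul _ _)) }
    refine ⟨Φ, fun _ => rfl, fun _ _ _ => rfl, ⟨?_⟩, ⟨?_⟩, ⟨?_⟩⟩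
    · intro x y m
      obtain ⟨f, hf⟩ := (hH _ _ _).1 ((key2 x y m.1).1 m.2)
      exact ⟨f, Subtype.ext hf⟩
    · intro x y f g h
      exact F_faithful _ _ (α_bij.1 (congrArg Subtype.val h))
    · intro p
      exact ⟨β' p.pt, ⟨eqToIso (congrArg Groth.mk (β_β' p.pt))⟩⟩
end

section
/- Let X be a compact Hausdorff space. The map sending an equivalence relation r on X with closed graph to the set {f ∈ C(X, ℂ) | ∀ x y, r x y → f x = f y} is a bijection from P(X) onto the set of unital closed star-subalgebras of the C*-algebra C(X, ℂ) of continuous complex-valued functions on X with supremum norm, and it is order-reversing in both directions: r ≤ s iff the subalgebra associated to s is contained in the subalgebra associated to r. In particular, the poset of commutative unital closed star-subalgebras of C(X, ℂ) ordered by inclusion is order-isomorphic to the order dual of P(X). -/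
universe u

/-- `P(X)`: the poset of equivalence relations on `X` with closed graph, ordered by
refinement. -/
def ClosedEquiv (X : Type u) [TopologicalSpace X] : Type u :=
  { r : Setoid X // IsClosed {p : X × X | r p.1 p.2} }

instance (X : Type u) [TopologicalSpace X] : PartialOrder (ClosedEquiv X) :=
  Subtype.partialOrder _

/-- The unital star-subalgebra of `C(X, ℂ)` associated to an equivalence relation `r`
on `X`: the continuous functions constant on the equivalence classes of `r`. -/
noncomputable def relSubalgebra (X : Type u) [TopologicalSpace X] (r : Setoid X) :
    StarSubalgebra ℂ C(X, ℂ) where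
  carrier := {f : C(X, ℂ) | ∀ x y : X, r x y → f x = f y}
  mul_mem' := fun {a b} ha hb x y h => by
    simp only [ContinuousMap.mul_apply, ha x y h, hb x y h]
  add_mem' := fun {a b} ha hb x y h => by
    simp only [ContinuousMap.add_apply, ha x y h, hb x y h]
  one_mem' := fun x y _ => rfl
  zero_mem' := fun x y _ => rfl
  algebraMap_mem' := fun c x y _ => rfl
  star_mem' := fun {a} ha x y h => by
    simp only [ContinuousMap.star_apply, ha x y h]

theorem quot_isClosedMap (X : Type u) [TopologicalSpace X] [CompactSpace X] (r : Setoid X)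
    (hr : IsClosed {p : X × X | r p.1 p.2}) :
    IsClosedMap (Quotient.mk r) := by
  intro C hC
  have h1 : IsClosed (Prod.snd '' ({p : X × X | r p.1 p.2} ∩ Prod.fst ⁻¹' C)) :=
    isClosedMap_snd_of_compactSpace _ (hr.inter (hC.preimage continuous_fst))
  have hq : Topology.IsQuotientMap (Quotient.mk r) := isQuotientMap_quotient_mk'
  rw [← hq.isClosed_preimage]
  convert h1 using 1
  ext y
  constructor
  · rintro ⟨x, hx, hxy⟩
    exact ⟨(x, y), ⟨Quotient.exact hxy, hx⟩, rfl⟩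
  · rintro ⟨⟨x, y'⟩, ⟨h, hx⟩, rfl⟩
    exact ⟨x, hx, Quotient.sound h⟩

theorem quot_t2 (X : Type u) [TopologicalSpace X] [CompactSpace X] [T2Space X] (r : Setoid X)
    (hr : IsClosed {p : X × X | r p.1 p.2}) : T2Space (Quotient r) := by
  have hcl := quot_isClosedMap X r hr
  have hcont : Continuous (Quotient.mk r) := continuous_quotient_mk'
  have hpt : ∀ q : Quotient r, IsClosed ({q} : Set (Quotient r)) := by
    intro q
    induction q using Quotient.inductionOn with
    | h x => simpa using hcl {x} isClosed_singleton
  refine ⟨fun a b hab => ?_⟩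
  obtain ⟨U, V, hU, hV, haU, hbV, hUV⟩ := normal_separation ((hpt a).preimage hcont)
    ((hpt b).preimage hcont) ((Set.disjoint_singleton.2 hab).preimage _)
  refine ⟨(Quotient.mk r '' Uᶜ)ᶜ, (Quotient.mk r '' Vᶜ)ᶜ, (hcl _ hU.isClosed_compl).isOpen_compl,
    (hcl _ hV.isClosed_compl).isOpen_compl, ?_, ?_, ?_⟩
  · rintro ⟨x, hx, rfl⟩
    exact hx (haU rfl)
  · rintro ⟨x, hx, rfl⟩
    exact hx (hbV rfl)
  · rw [Set.disjoint_left]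
    intro q
    induction q using Quotient.inductionOn with
    | h x =>
      intro h1 h2
      have hxU : x ∈ U := by
        by_contra h
        exact h1 ⟨x, h, rfl⟩
      have hxV : x ∈ V := by
        by_contra h
        exact h2 ⟨x, h, rfl⟩
      exact Set.disjoint_left.1 hUV hxU hxV

theorem mem_relSubalgebra (X : Type u) [TopologicalSpace X] (r : Setoid X) (f : C(X, ℂ)) :
    f ∈ relSubalgebra X r ↔ ∀ x y : X, r x y → f x = f y := Iff.rfl

theorem rel_closed (X : Type u) [TopologicalSpace X] [CompactSpace X] (r : Setoid X) :
    IsClosed ((relSubalgebra X r : Set C(X, ℂ))) := by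
  have : (relSubalgebra X r : Set C(X, ℂ)) = ⋂ (x : X) (y : X) (_ : r x y), {f | f x = f y} := by
    ext f
    simp [mem_relSubalgebra]
  rw [this]
  refine isClosed_iInter fun x => isClosed_iInter fun y => isClosed_iInter fun _ => ?_
  exact isClosed_eq (continuous_eval_const x) (continuous_eval_const y)

theorem rel_le (X : Type u) [TopologicalSpace X] [CompactSpace X] [T2Space X]
    (r s : ClosedEquiv X) : r ≤ s ↔ relSubalgebra X s.1 ≤ relSubalgebra X r.1 := by
  constructor
  · intro h f hf x y hxy
    exact hf x y (h hxy)
  · intro h x y hxy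
    by_contra hs
    haveI := quot_t2 X s.1 s.2
    have hne : Quotient.mk s.1 x ≠ Quotient.mk s.1 y := fun e => hs (Quotient.exact e)
    obtain ⟨f, hf0, hf1, -⟩ := exists_continuous_zero_one_of_isClosed
      (isClosed_singleton (x := Quotient.mk s.1 x)) (isClosed_singleton (x := Quotient.mk s.1 y))
      (Set.disjoint_singleton.2 hne)
    have hcont : Continuous (Quotient.mk s.1) := continuous_quotient_mk'
    let g : C(X, ℂ) := ⟨fun z => (f (Quotient.mk s.1 z) : ℂ),
      Complex.continuous_ofReal.comp (f.continuous.comp hcont)⟩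
    have hg : g ∈ relSubalgebra X s.1 := by
      intro a b hab
      have : Quotient.mk s.1 a = Quotient.mk s.1 b := Quotient.sound hab
      simp [g, this]
    have e : g x = g y := h hg x y hxy
    have h0 : f (Quotient.mk s.1 x) = 0 := hf0 rfl
    have h1 : f (Quotient.mk s.1 y) = 1 := hf1 rfl
    simp [g, h0, h1] at e

theorem rel_surj (X : Type u) [TopologicalSpace X] [CompactSpace X] [T2Space X]
    (S : StarSubalgebra ℂ C(X, ℂ)) (hS : IsClosed (S : Set C(X, ℂ))) :
    ∃ r : ClosedEquiv X, relSubalgebra X r.1 = S := by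
  let r : Setoid X :=
    { r := fun x y => ∀ f ∈ S, f x = f y
      iseqv := ⟨fun _ _ _ => rfl, fun h f hf => (h f hf).symm,
        fun h k f hf => (h f hf).trans (k f hf)⟩ }
  have hr : IsClosed {p : X × X | r p.1 p.2} := by
    have : {p : X × X | r p.1 p.2} = ⋂ f ∈ S, {p : X × X | f p.1 = f p.2} := by
      ext p
      simp only [Set.mem_iInter]
      exact Iff.rfl
    rw [this]
    exact isClosed_biInter fun f _ =>
      isClosed_eq (f.continuous.comp continuous_fst) (f.continuous.comp continuous_snd)
  refine ⟨⟨r, hr⟩, le_antisymm ?_ (fun f hf x y h => h f hf)⟩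
  intro f hf
  let π : C(X, Quotient r) := ⟨Quotient.mk r, continuous_quotient_mk'⟩
  let A : StarSubalgebra ℂ C(Quotient r, ℂ) := S.comap (ContinuousMap.compStarAlgHom' ℂ ℂ π)
  have hmem : ∀ g : C(Quotient r, ℂ), g ∈ A ↔ g.comp π ∈ S := fun g => Iff.rfl
  have hlift : ∀ g ∈ relSubalgebra X r, ∃ g' : C(Quotient r, ℂ), g'.comp π = g := by
    intro g hg
    exact ⟨⟨Quotient.lift g hg, g.continuous.quotient_lift hg⟩, rfl⟩
  have hAcl : IsClosed (A : Set C(Quotient r, ℂ)) :=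
    hS.preimage (ContinuousMap.continuous_precomp π)
  have hsep : A.SeparatesPoints := by
    intro a b hab
    induction a using Quotient.inductionOn with
    | h x =>
    induction b using Quotient.inductionOn with
    | h y =>
      have hxy : ¬ ∀ f ∈ S, f x = f y := fun h => hab (Quotient.sound h)
      push Not at hxy
      obtain ⟨g, hgS, hne⟩ := hxy
      obtain ⟨g', rfl⟩ := hlift g (fun x y h => h g hgS)
      exact ⟨g', ⟨g', hgS, rfl⟩, hne⟩
  have htop := ContinuousMap.starSubalgebra_topologicalClosure_eq_top_of_separatesPoints A hsep
  obtain ⟨f', rfl⟩ := hlift f hf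
  rw [← hmem]
  have h1 : f' ∈ (A.topologicalClosure : Set C(Quotient r, ℂ)) := by
    rw [htop]
    trivial
  rw [StarSubalgebra.topologicalClosure_coe, hAcl.closure_eq] at h1
  exact h1

/-- Let `X` be a compact Hausdorff space.  The map sending an
equivalence relation `r` on `X` with closed graph to
`{f ∈ C(X, ℂ) | ∀ x y, r x y → f x = f y}` is a bijection from `P(X)` onto the set
of unital closed star-subalgebras of the C*-algebra `C(X, ℂ)`, and it is
order-reversing in both directions.  In particular, the poset of unital closed
star-subalgebras of `C(X, ℂ)` under inclusion is order-isomorphic to the order dual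
of `P(X)`. -/
theorem stmt12 (X : Type u) [TopologicalSpace X] [CompactSpace X] [T2Space X] :
    -- the associated subalgebra is closed
    (∀ r : ClosedEquiv X, IsClosed ((relSubalgebra X r.1 : Set C(X, ℂ)))) ∧
    -- injectivity
    Function.Injective (fun r : ClosedEquiv X => relSubalgebra X r.1) ∧
    -- surjectivity onto the unital closed star-subalgebras
    (∀ S : StarSubalgebra ℂ C(X, ℂ), IsClosed (S : Set C(X, ℂ)) →
      ∃ r : ClosedEquiv X, relSubalgebra X r.1 = S) ∧
    -- order-reversing in both directions
    (∀ r s : ClosedEquiv X, r ≤ s ↔ relSubalgebra X s.1 ≤ relSubalgebra X r.1) ∧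
    -- hence: order isomorphism with the order dual
    Nonempty ((ClosedEquiv X)ᵒᵈ ≃o
      { S : StarSubalgebra ℂ C(X, ℂ) // IsClosed (S : Set C(X, ℂ)) }) := by

  have hinj : Function.Injective (fun r : ClosedEquiv X => relSubalgebra X r.1) := by
    intro r s h
    exact le_antisymm ((rel_le X r s).2 (le_of_eq h.symm)) ((rel_le X s r).2 (le_of_eq h))
  refine ⟨fun r => rel_closed X r.1, hinj, rel_surj X, rel_le X, ?_⟩
  let F : (ClosedEquiv X)ᵒᵈ → { S : StarSubalgebra ℂ C(X, ℂ) // IsClosed (S : Set C(X, ℂ)) } :=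
    fun r => ⟨relSubalgebra X (OrderDual.ofDual r).1, rel_closed X _⟩
  have hF : Function.Bijective F := by
    constructor
    · intro r s h
      exact hinj (congrArg Subtype.val h)
    · rintro ⟨S, hS⟩
      obtain ⟨r, hr⟩ := rel_surj X S hS
      exact ⟨OrderDual.toDual r, Subtype.ext hr⟩
  exact ⟨{ toEquiv := Equiv.ofBijective F hF
           map_rel_iff' := fun {a b} => (rel_le X (OrderDual.ofDual b) (OrderDual.ofDual a)).symm }⟩
end

section
/- Let H be an infinite-dimensional complex Hilbert space and let B(H) = H →L[ℂ] H be the C*-algebra of bounded linear operators on H. Then there exists a commutative unital closed star-subalgebra D of B(H) which is weakly terminal: every commutative unital closed star-subalgebra C of B(H) admits an injective unital star-algebra homomorphism C → D. -/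
universe u

open MeasureTheory ProbabilityTheory unitInterval Set

lemma aux_succ {Ω A : Type*} [MeasurableSpace Ω] [MeasurableSpace A] (P : Measure Ω)
    [IsProbabilityMeasure P] (X : Ω → A) (U : Ω → I) (hX : Measurable X) (hU : Measurable U)
    (hind : IndepFun X U P) (hlaw : P.map U = volume) (κ : Kernel A ℂ) [IsMarkovKernel κ]
    (f : A → I → ℂ) (hf : Measurable (Function.uncurry f)) (hfκ : ∀ a, volume.map (f a) = κ a) :
    P.map (fun ω => (X ω, f (X ω) (U ω))) = (P.map X) ⊗ₘ κ := by
  have : IsProbabilityMeasure (P.map X) := Measure.isProbabilityMeasure_map hX.aemeasurable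
  have h1 : P.map (fun ω => (X ω, U ω)) = (P.map X).prod volume := by
    rw [← hlaw]
    exact hind.map_prod_eq_prod_map_map hX.aemeasurable hU.aemeasurable
  have hg : Measurable (fun p : A × I => (p.1, f p.1 p.2)) := measurable_fst.prodMk hf
  have h2 : P.map (fun ω => (X ω, f (X ω) (U ω))) =
      ((P.map X).prod volume).map (fun p : A × I => (p.1, f p.1 p.2)) := by
    rw [← h1, Measure.map_map hg (hX.prodMk hU)]; rfl
  rw [h2]
  ext s hs
  rw [Measure.map_apply hg hs, Measure.prod_apply (hg hs), Measure.compProd_apply hs]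
  refine lintegral_congr fun a => ?_
  rw [← hfκ a, Measure.map_apply hf.of_uncurry_left (measurable_prodMk_left hs)]
  rfl

lemma exists_transfer {ι : Type*} [LinearOrder ι] [WellFoundedLT ι] (ν : Measure (ι → ℂ))
    [IsProbabilityMeasure ν] :
    ∃ T : (ι → I) → (ι → ℂ),
      MeasurePreserving T (Measure.infinitePi fun _ : ι => (volume : Measure I)) ν := by
  classical
  set P : Measure (ι → I) := Measure.infinitePi fun _ : ι => (volume : Measure I) with hP
  let R : (b : ι) → (ι → ℂ) → (Iio b → ℂ) := fun b x j => x j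
  have hR : ∀ b, Measurable (R b) := fun b => by fun_prop
  let κ : (b : ι) → Kernel (Iio b → ℂ) ℂ := fun b => condDistrib (fun x => x b) (R b) ν
  have hf : ∀ b, ∃ f : (Iio b → ℂ) → I → ℂ, Measurable (Function.uncurry f) ∧
      ∀ a, volume.map (f a) = κ b a := fun b =>
    Kernel.exists_measurable_map_eq_unitInterval (κ b)
  choose f hfm hfκ using hf
  have wf : WellFounded ((· < ·) : ι → ι → Prop) := wellFounded_lt
  let T : (ι → I) → (ι → ℂ) := fun u => wf.fix (C := fun _ => ℂ)
    (fun b ih => f b (fun j => ih j.1 j.2) (u b))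
  have hT : ∀ u b, T u b = f b (R b (T u)) (u b) := fun u b => by
    simp only [T]
    rw [WellFounded.fix_eq]
  -- measurability with respect to past coordinates
  let mm : ι → MeasurableSpace (ι → I) := fun i => MeasurableSpace.comap (fun u => u i) inferInstance
  have hmm : ∀ i, mm i ≤ (inferInstance : MeasurableSpace (ι → I)) := fun i =>
    (measurable_pi_apply i).comap_le
  have hpast : ∀ b, Measurable[⨆ i ∈ Iic b, mm i] (fun u => T u b) := by
    intro b
    induction b using wf.induction with
    | _ b ih =>
      have e : (fun u => T u b) = fun u => Function.uncurry (f b) (R b (T u), u b) := by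
        funext u; exact hT u b
      rw [e]
      refine (hfm b).comp (Measurable.prodMk ?_ ?_)
      · refine (@measurable_pi_iff _ _ _ (⨆ i ∈ Iic b, mm i) _ _).2 fun j => ?_
        refine (ih j.1 j.2).mono ?_ le_rfl
        exact biSup_mono fun i hi => le_trans hi (le_of_lt j.2)
      · refine Measurable.mono (comap_measurable (fun u : ι → I => u b)) ?_ le_rfl
        exact le_biSup mm (mem_Iic.2 le_rfl)
  have hRT : ∀ b, Measurable[⨆ i ∈ Iio b, mm i] (fun u => R b (T u)) := by
    intro b
    refine (@measurable_pi_iff _ _ _ (⨆ i ∈ Iio b, mm i) _ _).2 fun j => ?_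
    refine (hpast j.1).mono ?_ le_rfl
    exact biSup_mono fun i hi => lt_of_le_of_lt hi j.2
  have hTm : Measurable T := by
    refine measurable_pi_lambda _ fun b => (hpast b).mono (iSup₂_le fun i _ => hmm i) le_rfl
  have hindep : ∀ b, IndepFun (fun u => R b (T u)) (fun u : ι → I => u b) P := by
    intro b
    have h0 : iIndepFun (fun i (u : ι → I) => u i) P :=
      iIndepFun_infinitePi (X := fun i (x : I) => x) (by fun_prop)
    have h1 := indep_iSup_of_disjoint (m := mm) hmm h0
      (S := Iio b) (T := {b}) (by simp)
    rw [IndepFun_iff_Indep]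
    refine indep_of_indep_of_le_left (indep_of_indep_of_le_right h1 ?_) (hRT b).comap_le
    simp [mm]
  have hsucc : ∀ b, P.map (fun u => R b (T u)) = ν.map (R b) →
      P.map (fun u => (R b (T u), T u b)) = ν.map (fun x => (R b x, x b)) := by
    intro b hb
    rw [← compProd_map_condDistrib (measurable_pi_apply b).aemeasurable, ← hb,
      ← aux_succ P (fun u => R b (T u)) (fun u => u b) ((hR b).comp hTm) (measurable_pi_apply b)
        (hindep b) (Measure.infinitePi_map_eval _ b) (κ b) (f b) (hfm b) (hfκ b)]
    simp_rw [hT]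
  -- agreement on finite sets from agreement on (R b, b)
  have hfin : ∀ s : Finset ι, (∀ b ∈ s, P.map (fun u => R b (T u)) = ν.map (R b)) →
      P.map (fun u => s.restrict (T u)) = ν.map s.restrict := by
    intro s hs
    rcases s.eq_empty_or_nonempty with rfl | hne
    · ext A hA
      have : IsProbabilityMeasure (P.map fun u => (∅ : Finset ι).restrict (T u)) :=
        Measure.isProbabilityMeasure_map (by fun_prop)
      have : IsProbabilityMeasure (ν.map (∅ : Finset ι).restrict) :=
        Measure.isProbabilityMeasure_map (by fun_prop)
      rcases Set.eq_empty_or_nonempty A with rfl | ⟨a, ha⟩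
      · simp
      · have : A = univ := eq_univ_of_forall fun x => by rwa [Subsingleton.elim x a]
        rw [this, measure_univ, measure_univ]
    · set b := s.max' hne
      let g : (Iio b → ℂ) × ℂ → (s → ℂ) := fun p j =>
        if h : j.1 < b then p.1 ⟨j.1, h⟩ else p.2
      have hg : Measurable g := by
        refine measurable_pi_lambda _ fun j => ?_
        by_cases h : j.1 < b
        · simp only [g, h, dif_pos]; fun_prop
        · simp only [g, dif_neg h]; fun_prop
      have hgx : ∀ x : ι → ℂ, g (R b x, x b) = s.restrict x := by
        intro x; funext j
        by_cases h : j.1 < b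
        · simp [g, h, R]
        · have : j.1 = b := le_antisymm (s.le_max' _ j.2) (not_lt.1 h)
          simp [g, this]
      have h2 := congrArg (Measure.map g) (hsucc b (hs b (s.max'_mem hne)))
      rw [Measure.map_map hg (by fun_prop), Measure.map_map hg (by fun_prop)] at h2
      simpa [Function.comp_def, hgx] using h2
  have hall : ∀ b, P.map (fun u => R b (T u)) = ν.map (R b) := by
    intro b
    induction b using wf.induction with
    | _ b ih =>
      have hpr : IsProbabilityMeasure (ν.map (R b)) :=
        Measure.isProbabilityMeasure_map (by fun_prop)
      refine IsProjectiveLimit.unique (P := fun J : Finset (Iio b) => (ν.map (R b)).map J.restrict)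
        ?_ (fun J => rfl)
      intro J
      have h3 := hfin (J.map (Function.Embedding.subtype _)) (by
        intro c hc
        simp only [Finset.mem_map, Function.Embedding.subtype_apply] at hc
        obtain ⟨d, _, rfl⟩ := hc
        exact ih d.1 d.2)
      let g : (↥(J.map (Function.Embedding.subtype (· ∈ Iio b))) → ℂ) → (J → ℂ) := fun x j =>
        x ⟨j.1.1, Finset.mem_map_of_mem (Function.Embedding.subtype (· ∈ Iio b)) j.2⟩
      have hg : Measurable g := by fun_prop
      have h4 := congrArg (Measure.map g) h3
      rw [Measure.map_map hg (by fun_prop), Measure.map_map hg (by fun_prop)] at h4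
      simp only
      rw [Measure.map_map (by fun_prop) (by fun_prop), Measure.map_map (by fun_prop) (by fun_prop)]
      exact h4
  refine ⟨T, hTm, ?_⟩
  refine IsProjectiveLimit.unique (P := fun J : Finset ι => ν.map J.restrict) ?_ (fun J => rfl)
  intro J
  rw [Measure.map_map (by fun_prop) hTm]
  exact hfin J fun b _ => hall b

open CompactlySupported in
lemma exists_state_measure {H A : Type*} [NormedAddCommGroup H] [InnerProductSpace ℂ H]
    [CompleteSpace H] [CommCStarAlgebra A] (π : A →⋆ₐ[ℂ] (H →L[ℂ] H)) (ξ : H) (hξ : ‖ξ‖ = 1)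
    [MeasurableSpace (WeakDual.characterSpace ℂ A)] [BorelSpace (WeakDual.characterSpace ℂ A)] :
    ∃ μ : Measure (WeakDual.characterSpace ℂ A), IsProbabilityMeasure μ ∧
      ∀ c : A, ∫ x, ‖gelfandStarTransform A c x‖ ^ 2 ∂μ = ‖π c ξ‖ ^ 2 := by
  let X := WeakDual.characterSpace ℂ A
  let G := gelfandStarTransform A
  let ofR : C_c(X, ℝ) →ₗ[ℝ] C(X, ℂ) :=
    { toFun := fun f => ⟨fun x => (f x : ℂ), by fun_prop⟩
      map_add' := fun f g => by ext; simp
      map_smul' := fun r f => by ext; simp }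
  let L : C_c(X, ℝ) →ₗ[ℝ] ℝ :=
    { toFun := fun f => (inner ℂ ξ (π (G.symm (ofR f)) ξ)).re
      map_add' := fun f g => by simp
      map_smul' := fun r f => by
        have : G.symm (ofR (r • f)) = (r : ℂ) • G.symm (ofR f) := by
          rw [← map_smul]; congr 1
          ext; simp [ofR]
        rw [this, map_smul, _root_.smul_apply, inner_smul_right]
        simp }
  have key : ∀ (c : A) (f : C_c(X, ℝ)), (∀ x, f x = ‖G c x‖ ^ 2) → L f = ‖π c ξ‖ ^ 2 := by
    intro c f h
    have : ofR f = G (star c * c) := by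
      ext x
      simp only [map_mul, map_star, ContinuousMap.mul_apply, ContinuousMap.star_apply]
      change ((f x : ℝ) : ℂ) = _
      rw [h, RCLike.star_def, RCLike.conj_mul]
      simp
    change (inner ℂ ξ (π (G.symm (ofR f)) ξ)).re = _
    rw [this, StarAlgEquiv.symm_apply_apply, map_mul, map_star, mul_apply_eq_comp,
      ContinuousLinearMap.star_eq_adjoint, ContinuousLinearMap.adjoint_inner_right]
    exact inner_self_eq_norm_sq (𝕜 := ℂ) _
  have hpos : ∀ f : C_c(X, ℝ), 0 ≤ f → 0 ≤ L f := by
    intro f hf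
    have := key (G.symm ⟨fun x => ((Real.sqrt (f x) : ℝ) : ℂ), by fun_prop⟩) f (by
      intro x
      rw [StarAlgEquiv.apply_symm_apply]
      simp [Real.sq_sqrt (hf x)])
    rw [this]; positivity
  let Λ : C_c(X, ℝ) →ₚ[ℝ] ℝ := PositiveLinearMap.mk₀ L hpos
  have hint : ∀ c : A, ∫ x, ‖G c x‖ ^ 2 ∂(RealRMK.rieszMeasure Λ) = ‖π c ξ‖ ^ 2 := by
    intro c
    let f : C_c(X, ℝ) := ⟨⟨fun x => ‖G c x‖ ^ 2, by fun_prop⟩, HasCompactSupport.of_compactSpace _⟩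
    rw [← key c f (fun x => rfl)]
    exact RealRMK.integral_rieszMeasure Λ f
  refine ⟨RealRMK.rieszMeasure Λ, ?_, hint⟩
  have h1 := hint 1
  simp only [map_one, ContinuousMap.one_apply, norm_one, one_pow, integral_const, smul_eq_mul,
    mul_one, one_apply_eq_self, hξ] at h1
  refine ⟨?_⟩
  rw [measureReal_def] at h1
  exact (ENNReal.toReal_eq_one_iff _).1 h1

lemma exists_dense_family {H A ι : Type*} [NormedAddCommGroup H] [InnerProductSpace ℂ H]
    [CompleteSpace H] [AddCommGroup A] [Module ℂ A] (b : HilbertBasis ι ℂ H) (L : A →ₗ[ℂ] H) :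
    ∃ a : ι × ℕ → A, ∀ c : A, ∀ ε > 0, ∃ d ∈ Submodule.span ℂ (range a), ‖L (c - d)‖ < ε := by
  let K := (LinearMap.range L).topologicalClosure
  have : CompleteSpace K := (Submodule.isClosed_topologicalClosure _).completeSpace_coe
  let Q : H →L[ℂ] H := K.subtypeL ∘L K.orthogonalProjectionOnto
  have hQ : ∀ i, ∃ a : ℕ → A, Filter.Tendsto (fun n => L (a n)) Filter.atTop (nhds (Q (b i))) := by
    intro i
    have h1 : Q (b i) ∈ closure (LinearMap.range L : Set H) := (K.orthogonalProjectionOnto (b i)).2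
    obtain ⟨x, hx, hl⟩ := mem_closure_iff_seq_limit.1 h1
    choose a ha using hx
    exact ⟨a, by simpa [ha] using hl⟩
  choose a ha using hQ
  refine ⟨fun p => a p.1 p.2, fun c ε hε => ?_⟩
  set M := Submodule.span ℂ (range fun p : ι × ℕ => a p.1 p.2) with hM
  let S := (M.map L).topologicalClosure
  have hS : IsClosed (S : Set H) := Submodule.isClosed_topologicalClosure _
  have h2 : ∀ i, Q (b i) ∈ S := fun i => hS.mem_of_tendsto (ha i) (Filter.Eventually.of_forall
    fun n => Submodule.le_topologicalClosure _ (Submodule.mem_map_of_mem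
      (Submodule.subset_span ⟨(i, n), rfl⟩)))
  have h3 : ∀ x, Q x ∈ S := by
    intro x
    have h4 : IsClosed ((S.comap Q.toLinearMap : Submodule ℂ H) : Set H) :=
      hS.preimage Q.continuous
    have h5 : (Submodule.span ℂ (range b)).topologicalClosure ≤ S.comap Q.toLinearMap := by
      refine Submodule.topologicalClosure_minimal _ ?_ h4
      rw [Submodule.span_le]
      rintro _ ⟨i, rfl⟩
      exact h2 i
    rw [b.dense_span] at h5
    exact h5 (x := x) trivial
  have h6 : L c ∈ closure (M.map L : Set H) := by
    have h7 := h3 (L c)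
    have h8 : Q (L c) = L c := by
      have : L c ∈ K := Submodule.le_topologicalClosure _ ⟨c, rfl⟩
      exact Submodule.starProjection_eq_self_iff.2 this
    rw [h8] at h7
    exact h7
  obtain ⟨_, ⟨d, hd, rfl⟩, hlt⟩ := Metric.mem_closure_iff.1 h6 ε hε
  exact ⟨d, hd, by rwa [map_sub, ← dist_eq_norm]⟩

lemma exists_factor {H A ι : Type*} [NormedAddCommGroup H] [InnerProductSpace ℂ H]
    [CompleteSpace H] [CommCStarAlgebra A] (π : A →⋆ₐ[ℂ] (H →L[ℂ] H)) (ξ : H)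
    [MeasurableSpace (WeakDual.characterSpace ℂ A)] [BorelSpace (WeakDual.characterSpace ℂ A)]
    (μ : Measure (WeakDual.characterSpace ℂ A)) [IsProbabilityMeasure μ]
    (hμ : ∀ c : A, ∫ x, ‖gelfandStarTransform A c x‖ ^ 2 ∂μ = ‖π c ξ‖ ^ 2)
    (a : ι → A)
    (ha : ∀ c : A, ∀ ε > 0, ∃ d ∈ Submodule.span ℂ (range a), ‖π (c - d) ξ‖ < ε)
    (Φ : WeakDual.characterSpace ℂ A → ι → ℂ) (hΦ : Φ = fun x i => gelfandStarTransform A (a i) x)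
    (c : A) :
    ∃ g : (ι → ℂ) → ℂ, Measurable g ∧ (∀ y, ‖g y‖ ≤ ‖c‖) ∧
      ∀ᵐ x ∂μ, g (Φ x) = gelfandStarTransform A c x := by
  let G := gelfandStarTransform A
  have hΦm : Measurable Φ := by
    rw [hΦ]
    exact measurable_pi_lambda _ fun i => (G (a i)).continuous.measurable
  have hmp : MeasurePreserving Φ μ (μ.map Φ) := ⟨hΦm, rfl⟩
  have hbd : ∀ (c : A) x, ‖G c x‖ ≤ ‖c‖ := fun c x => by
    have h1 := (G c).norm_coe_le_norm x
    have h2 : ‖G c‖ = ‖c‖ := (gelfandTransform_isometry A).norm_map_of_map_zero (map_zero _) c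
    rwa [h2] at h1
  let W : A →ₗ[ℂ] Lp ℂ 2 μ :=
    (ContinuousMap.toLp 2 μ ℂ : C(_, ℂ) →L[ℂ] Lp ℂ 2 μ).toLinearMap ∘ₗ G.toStarAlgHom.toLinearMap
  have hWc : ∀ c, W c =ᵐ[μ] G c := fun c => ContinuousMap.coeFn_toLp (p := 2) (𝕜 := ℂ) μ (G c)
  have hW : ∀ c, ‖W c‖ = ‖π c ξ‖ := by
    intro c
    have h1 : ‖W c‖ ^ 2 = ‖π c ξ‖ ^ 2 := by
      rw [← hμ c, ← inner_self_eq_norm_sq (𝕜 := ℂ), L2.inner_def]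
      have : ∫ x, inner ℂ (W c x) (W c x) ∂μ = ∫ x, ((‖G c x‖ ^ 2 : ℝ) : ℂ) ∂μ := by
        refine integral_congr_ae ?_
        filter_upwards [hWc c] with x hx
        rw [hx, inner_self_eq_norm_sq_to_K]; simp
      rw [this, integral_complex_ofReal]
      rfl
    exact (pow_left_inj₀ (norm_nonneg _) (norm_nonneg _) two_ne_zero).1 h1
  let V : Lp ℂ 2 (μ.map Φ) →ₗᵢ[ℂ] Lp ℂ 2 μ := Lp.compMeasurePreservingₗᵢ ℂ Φ hmp
  have hcl : IsClosed (LinearMap.range V.toLinearMap : Set (Lp ℂ 2 μ)) := by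
    have h0 : (LinearMap.range V.toLinearMap : Set (Lp ℂ 2 μ)) = range V := by
      ext; simp
    rw [h0]
    exact V.isometry.isClosedEmbedding.isClosed_range
  have hprob : IsProbabilityMeasure (μ.map Φ) := Measure.isProbabilityMeasure_map hΦm.aemeasurable
  have hgen : Submodule.span ℂ (range a) ≤ (LinearMap.range V.toLinearMap).comap W := by
    rw [Submodule.span_le]
    rintro _ ⟨i, rfl⟩
    have hmem : MemLp (fun y : ι → ℂ => y i) 2 (μ.map Φ) := by
      refine MemLp.of_bound (measurable_pi_apply i).aestronglyMeasurable ‖a i‖ ?_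
      rw [ae_map_iff hΦm.aemeasurable (measurableSet_le (by fun_prop) measurable_const)]
      refine Filter.Eventually.of_forall fun x => ?_
      rw [hΦ]
      exact hbd _ x
    refine ⟨hmem.toLp _, ?_⟩
    change V (hmem.toLp _) = W (a i)
    apply Lp.ext
    have h1 : V (hmem.toLp _) =ᵐ[μ] (hmem.toLp _) ∘ Φ := Lp.coeFn_compMeasurePreserving _ hmp
    have h2 := hmp.quasiMeasurePreserving.ae_eq_comp hmem.coeFn_toLp
    filter_upwards [h1, h2, hWc (a i)] with x h1 h2 h3
    rw [h1, h2, h3, hΦ]; rfl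
  have hmem : W c ∈ LinearMap.range V.toLinearMap := by
    have : W c ∈ closure (LinearMap.range V.toLinearMap : Set (Lp ℂ 2 μ)) := by
      rw [Metric.mem_closure_iff]
      intro ε hε
      obtain ⟨d, hd, hlt⟩ := ha c ε hε
      refine ⟨W d, hgen hd, ?_⟩
      rwa [dist_eq_norm, ← map_sub, hW]
    rwa [hcl.closure_eq] at this
  obtain ⟨g0, hg0⟩ := hmem
  change V g0 = W c at hg0
  have hgm : Measurable (g0 : (ι → ℂ) → ℂ) := (Lp.stronglyMeasurable g0).measurable
  have hae : ∀ᵐ x ∂μ, g0 (Φ x) = G c x := by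
    have h1 : V g0 =ᵐ[μ] g0 ∘ Φ := Lp.coeFn_compMeasurePreserving _ hmp
    rw [hg0] at h1
    filter_upwards [h1, hWc c] with x h1 h2
    rw [← h2, h1]; rfl
  classical
  refine ⟨fun y => if ‖g0 y‖ ≤ ‖c‖ then g0 y else 0,
    Measurable.ite (measurableSet_le hgm.norm measurable_const) hgm measurable_const, ?_, ?_⟩
  · intro y
    dsimp only
    split_ifs with h
    · exact h
    · simp
  · filter_upwards [hae] with x hx
    rw [hx, if_pos (hbd c x)]

lemma exists_sample {H A ι : Type*} [NormedAddCommGroup H] [InnerProductSpace ℂ H]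
    [CompleteSpace H] [CommCStarAlgebra A] (π : A →⋆ₐ[ℂ] (H →L[ℂ] H)) (ξ : H) (hξ : ‖ξ‖ = 1)
    [LinearOrder ι] [WellFoundedLT ι] (b : HilbertBasis ι ℂ H) (e : ι ≃ ι × ℕ) :
    ∃ F : A → (ι → I) → ℂ, (∀ c, Measurable (F c)) ∧ (∀ c u, ‖F c u‖ ≤ ‖c‖) ∧
      (∀ᵐ u ∂(Measure.infinitePi fun _ : ι => (volume : Measure I)), F 1 u = 1) ∧
      (∀ c d, ∀ᵐ u ∂(Measure.infinitePi fun _ : ι => (volume : Measure I)),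
        F (c + d) u = F c u + F d u) ∧
      (∀ c d, ∀ᵐ u ∂(Measure.infinitePi fun _ : ι => (volume : Measure I)),
        F (c * d) u = F c u * F d u) ∧
      (∀ (r : ℂ) c, ∀ᵐ u ∂(Measure.infinitePi fun _ : ι => (volume : Measure I)),
        F (r • c) u = r * F c u) ∧
      (∀ c, ∀ᵐ u ∂(Measure.infinitePi fun _ : ι => (volume : Measure I)),
        F (star c) u = star (F c u)) ∧
      (∀ c, (∀ᵐ u ∂(Measure.infinitePi fun _ : ι => (volume : Measure I)), F c u = 0) →
        π c ξ = 0) := by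
  letI : MeasurableSpace (WeakDual.characterSpace ℂ A) := borel _
  haveI : BorelSpace (WeakDual.characterSpace ℂ A) := ⟨rfl⟩
  obtain ⟨μ, hμp, hμ⟩ := exists_state_measure π ξ hξ
  let L : A →ₗ[ℂ] H :=
    { toFun := fun c => π c ξ
      map_add' := fun c d => by simp
      map_smul' := fun r c => by simp }
  obtain ⟨a0, ha0⟩ := exists_dense_family b L
  let a : ι → A := a0 ∘ e
  have hra : range a = range a0 := e.surjective.range_comp a0
  have ha : ∀ c : A, ∀ ε > 0, ∃ d ∈ Submodule.span ℂ (range a), ‖π (c - d) ξ‖ < ε := by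
    rw [hra]; exact ha0
  let Φ : WeakDual.characterSpace ℂ A → ι → ℂ := fun x i => gelfandStarTransform A (a i) x
  have hΦm : Measurable Φ :=
    measurable_pi_lambda _ fun i => (gelfandStarTransform A (a i)).continuous.measurable
  choose g hgm hgb hg using exists_factor π ξ μ hμ a ha Φ rfl
  have hprob : IsProbabilityMeasure (μ.map Φ) := Measure.isProbabilityMeasure_map hΦm.aemeasurable
  obtain ⟨T, hT⟩ := exists_transfer (μ.map Φ)
  have tr : ∀ p : (ι → ℂ) → Prop, MeasurableSet {y | p y} →
      ((∀ᵐ u ∂(Measure.infinitePi fun _ : ι => (volume : Measure I)), p (T u)) ↔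
        ∀ᵐ x ∂μ, p (Φ x)) := by
    intro p hp
    rw [← ae_map_iff hΦm.aemeasurable hp, ← hT.map_eq, ae_map_iff hT.measurable.aemeasurable hp]
  refine ⟨fun c u => g c (T u), fun c => (hgm c).comp hT.measurable, fun c u => hgb c _,
    ?_, ?_, ?_, ?_, ?_, ?_⟩
  · refine (tr (fun y => g 1 y = 1) (measurableSet_eq_fun (hgm _) measurable_const)).2 ?_
    filter_upwards [hg 1] with x h
    rw [h]; simp
  · intro c d
    refine (tr (fun y => g (c + d) y = g c y + g d y)
      (measurableSet_eq_fun (hgm _) ((hgm c).add (hgm d)))).2 ?_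
    filter_upwards [hg (c + d), hg c, hg d] with x h h1 h2
    rw [h, h1, h2]; simp
  · intro c d
    refine (tr (fun y => g (c * d) y = g c y * g d y)
      (measurableSet_eq_fun (hgm _) ((hgm c).mul (hgm d)))).2 ?_
    filter_upwards [hg (c * d), hg c, hg d] with x h h1 h2
    rw [h, h1, h2]; simp
  · intro r c
    refine (tr (fun y => g (r • c) y = r * g c y)
      (measurableSet_eq_fun (hgm _) ((hgm c).const_mul r))).2 ?_
    filter_upwards [hg (r • c), hg c] with x h h1
    rw [h, h1]; simp
  · intro c
    refine (tr (fun y => g (star c) y = star (g c y))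
      (measurableSet_eq_fun (hgm _) (continuous_star.measurable.comp (hgm c)))).2 ?_
    filter_upwards [hg (star c), hg c] with x h h1
    rw [h, h1, map_star]; rfl
  · intro c hc
    have h0 := (tr (fun y => g c y = 0) (measurableSet_eq_fun (hgm _) measurable_const)).1 hc
    have h1 := hμ c
    have h2 : ∫ x, ‖gelfandStarTransform A c x‖ ^ 2 ∂μ = 0 := by
      refine integral_eq_zero_of_ae ?_
      filter_upwards [h0, hg c] with x h h'
      rw [← h', h]; simp
    rw [h2] at h1
    simpa using h1.symm


/-- Multiplication operator on `L²`. -/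
lemma exists_mulOp {Y : Type*} [MeasurableSpace Y] (m : Measure Y) (F : Y → ℂ) (hF : Measurable F)
    (K : ℝ) (hK : ∀ y, ‖F y‖ ≤ K) :
    ∃ T : Lp ℂ 2 m →L[ℂ] Lp ℂ 2 m, ∀ f : Lp ℂ 2 m, T f =ᵐ[m] fun y => F y * f y := by
  have hb : ∀ f : Lp ℂ 2 m, ∀ᵐ y ∂m, ‖F y * f y‖ ≤ K * ‖f y‖ := fun f =>
    Filter.Eventually.of_forall fun y => by
      rw [norm_mul]; exact mul_le_mul_of_nonneg_right (hK y) (norm_nonneg _)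
  have hmem : ∀ f : Lp ℂ 2 m, MemLp (fun y => F y * f y) 2 m := fun f =>
    (Lp.memLp f).of_le_mul (hF.aestronglyMeasurable.mul (Lp.aestronglyMeasurable f)) (hb f)
  let L : Lp ℂ 2 m →ₗ[ℂ] Lp ℂ 2 m :=
    { toFun := fun f => (hmem f).toLp _
      map_add' := fun f g => by
        apply Lp.ext
        filter_upwards [(hmem (f + g)).coeFn_toLp, (hmem f).coeFn_toLp, (hmem g).coeFn_toLp,
          Lp.coeFn_add f g, Lp.coeFn_add ((hmem f).toLp _) ((hmem g).toLp _)] with y h1 h2 h3 h4 h5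
        rw [h1, h5, Pi.add_apply, h2, h3, h4, Pi.add_apply, mul_add]
      map_smul' := fun r f => by
        apply Lp.ext
        filter_upwards [(hmem (r • f)).coeFn_toLp, (hmem f).coeFn_toLp,
          Lp.coeFn_smul r f, Lp.coeFn_smul r ((hmem f).toLp _)] with y h1 h2 h3 h4
        rw [h1, RingHom.id_apply, h4, Pi.smul_apply, h2, h3, Pi.smul_apply]
        simp only [smul_eq_mul]; ring }
  refine ⟨L.mkContinuous K fun f => ?_, fun f => (hmem f).coeFn_toLp⟩
  refine Lp.norm_le_mul_norm_of_ae_le_mul ?_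
  filter_upwards [(hmem f).coeFn_toLp, hb f] with y h1 h2
  change ‖((hmem f).toLp _ : Y → ℂ) y‖ ≤ _
  rw [h1]; exact h2

/-- `T` is multiplication by `F`. -/
def IsMulBy {Y : Type*} [MeasurableSpace Y] (m : Measure Y) (F : Y → ℂ)
    (T : Lp ℂ 2 m →L[ℂ] Lp ℂ 2 m) : Prop :=
  ∀ f : Lp ℂ 2 m, T f =ᵐ[m] fun y => F y * f y

lemma IsMulBy.congr {Y : Type*} [MeasurableSpace Y] {m : Measure Y} {F G : Y → ℂ}
    {S T : Lp ℂ 2 m →L[ℂ] Lp ℂ 2 m} (hS : IsMulBy m F S) (hT : IsMulBy m G T)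
    (h : ∀ᵐ y ∂m, F y = G y) : S = T := by
  ext1 f
  apply Lp.ext
  filter_upwards [hS f, hT f, h] with y h1 h2 h3
  rw [h1, h2, h3]

lemma IsMulBy.mul {Y : Type*} [MeasurableSpace Y] {m : Measure Y} {F G : Y → ℂ}
    {S T : Lp ℂ 2 m →L[ℂ] Lp ℂ 2 m} (hS : IsMulBy m F S) (hT : IsMulBy m G T) :
    IsMulBy m (fun y => F y * G y) (S * T) := by
  intro f
  filter_upwards [hS (T f), hT f] with y h1 h2
  rw [mul_apply_eq_comp, h1, h2, mul_assoc]

lemma IsMulBy.add {Y : Type*} [MeasurableSpace Y] {m : Measure Y} {F G : Y → ℂ}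
    {S T : Lp ℂ 2 m →L[ℂ] Lp ℂ 2 m} (hS : IsMulBy m F S) (hT : IsMulBy m G T) :
    IsMulBy m (fun y => F y + G y) (S + T) := by
  intro f
  filter_upwards [hS f, hT f, Lp.coeFn_add (S f) (T f)] with y h1 h2 h3
  rw [_root_.add_apply, h3, Pi.add_apply, h1, h2, add_mul]

lemma IsMulBy.smul {Y : Type*} [MeasurableSpace Y] {m : Measure Y} {F : Y → ℂ}
    {S : Lp ℂ 2 m →L[ℂ] Lp ℂ 2 m} (r : ℂ) (hS : IsMulBy m F S) :
    IsMulBy m (fun y => r * F y) (r • S) := by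
  intro f
  filter_upwards [hS f, Lp.coeFn_smul r (S f)] with y h1 h3
  rw [_root_.smul_apply, h3, Pi.smul_apply, h1, smul_eq_mul, mul_assoc]

lemma IsMulBy.one {Y : Type*} [MeasurableSpace Y] {m : Measure Y} :
    IsMulBy m (fun _ => 1) (1 : Lp ℂ 2 m →L[ℂ] Lp ℂ 2 m) := by
  intro f
  simp

lemma IsMulBy.star_eq {Y : Type*} [MeasurableSpace Y] {m : Measure Y} {F : Y → ℂ}
    {S T : Lp ℂ 2 m →L[ℂ] Lp ℂ 2 m} (hS : IsMulBy m F S)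
    (hT : IsMulBy m (fun y => star (F y)) T) : star S = T := by
  rw [ContinuousLinearMap.star_eq_adjoint]
  symm
  rw [ContinuousLinearMap.eq_adjoint_iff]
  intro f g
  rw [L2.inner_def, L2.inner_def]
  refine integral_congr_ae ?_
  filter_upwards [hS g, hT f] with y h1 h2
  rw [h1, h2]
  simp only [RCLike.inner_apply, map_mul, RCLike.star_def, RCLike.conj_conj]
  ring


lemma exists_commSub {E : Type u} [NormedAddCommGroup E] [InnerProductSpace ℂ E] [CompleteSpace E]
    (M : Set (E →L[ℂ] E)) (hcomm : ∀ x ∈ M, ∀ y ∈ M, x * y = y * x) (hstar : ∀ x ∈ M, star x ∈ M) :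
    ∃ D : CommSub (E →L[ℂ] E), M ⊆ D.sub := by
  let Z := StarSubalgebra.centralizer ℂ M
  have hMZ : M ⊆ Z := by
    intro x hx
    rw [SetLike.mem_coe, StarSubalgebra.mem_centralizer_iff]
    exact fun y hy => ⟨hcomm y hy x hx, hcomm _ (hstar y hy) x hx⟩
  refine ⟨⟨StarSubalgebra.centralizer ℂ (Z : Set (E →L[ℂ] E)), ?_, ?_⟩, ?_⟩
  · intro x hx y hy
    have hxZ : x ∈ Z := by
      rw [StarSubalgebra.mem_centralizer_iff] at hx ⊢
      exact fun g hg => hx g (hMZ hg)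
    rw [StarSubalgebra.mem_centralizer_iff] at hy
    exact (hy x hxZ).1
  · rw [StarSubalgebra.coe_centralizer]
    exact Set.isClosed_centralizer _
  · intro x hx
    rw [SetLike.mem_coe, StarSubalgebra.mem_centralizer_iff]
    intro g hg
    have h1 := (StarSubalgebra.mem_centralizer_iff ℂ).1 hg x hx
    have h2 := (StarSubalgebra.mem_centralizer_iff ℂ).1 (star_mem hg) x hx
    exact ⟨h1.1.symm, h2.1.symm⟩


lemma measurableSet_sigma' {ι Ω : Type*} [MeasurableSpace Ω] {s : Set (Σ _ : ι, Ω)} :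
    MeasurableSet s ↔ ∀ i, MeasurableSet (Sigma.mk i ⁻¹' s) :=
  MeasurableSpace.measurableSet_iInf

lemma measurable_sigma' {ι Ω Z : Type*} [MeasurableSpace Ω] [MeasurableSpace Z]
    {f : (Σ _ : ι, Ω) → Z} (h : ∀ i, Measurable fun u => f ⟨i, u⟩) : Measurable f :=
  fun _ hs => measurableSet_sigma'.2 fun i => h i hs

lemma measurableEmbedding_sigmaMk' {ι Ω : Type*} [MeasurableSpace Ω] (i : ι) :
    MeasurableEmbedding (@Sigma.mk ι (fun _ => Ω) i) where
  injective := sigma_mk_injective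
  measurable := fun _ hs => measurableSet_sigma'.1 hs i
  measurableSet_image' := fun s hs => by
    classical
    rw [measurableSet_sigma']
    intro j
    by_cases h : i = j
    · subst h
      rwa [preimage_image_eq _ sigma_mk_injective]
    · rw [preimage_image_sigmaMk_of_ne (Ne.symm h)]
      exact MeasurableSet.empty

/-- The sum over `ι` of copies of `P`. -/
noncomputable def sigMeas (ι : Type*) {Ω : Type*} [MeasurableSpace Ω] (P : Measure Ω) :
    Measure (Σ _ : ι, Ω) :=
  Measure.sum fun i : ι => P.map (Sigma.mk i)

lemma ae_sigMeas {ι Ω : Type*} [MeasurableSpace Ω] (P : Measure Ω) {p : (Σ _ : ι, Ω) → Prop}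
    (hp : MeasurableSet {y | p y}) :
    (∀ᵐ y ∂sigMeas ι P, p y) ↔ ∀ i, ∀ᵐ u ∂P, p ⟨i, u⟩ := by
  rw [sigMeas, Measure.ae_sum_iff' hp]
  refine forall_congr' fun i => ?_
  rw [ae_map_iff (measurableEmbedding_sigmaMk' i).measurable.aemeasurable hp]

lemma sigMeas_restrict {ι Ω : Type*} [MeasurableSpace Ω] (P : Measure Ω) (i : ι) {B : Set Ω}
    (hB : MeasurableSet B) :
    (sigMeas ι P).restrict (Sigma.mk i '' B) = (P.restrict B).map (Sigma.mk i) := by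
  have hi := measurableEmbedding_sigmaMk' (Ω := Ω) i
  ext A hA
  have hm : MeasurableSet (A ∩ Sigma.mk i '' B) := hA.inter (hi.measurableSet_image' hB)
  rw [Measure.restrict_apply hA, Measure.map_apply hi.measurable hA,
    Measure.restrict_apply (hi.measurable hA), sigMeas, Measure.sum_apply _ hm,
    tsum_eq_single i]
  · rw [Measure.map_apply hi.measurable hm, preimage_inter,
      preimage_image_eq _ sigma_mk_injective]
  · intro j hj
    rw [Measure.map_apply (measurableEmbedding_sigmaMk' j).measurable hm, preimage_inter,
      preimage_image_sigmaMk_of_ne hj, inter_empty, measure_empty]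

lemma sigMeas_image {ι Ω : Type*} [MeasurableSpace Ω] (P : Measure Ω) (i : ι) {B : Set Ω}
    (hB : MeasurableSet B) : sigMeas ι P (Sigma.mk i '' B) = P B := by
  have hi := measurableEmbedding_sigmaMk' (Ω := Ω) i
  have := congrArg (fun μ => μ univ) (sigMeas_restrict P i hB)
  simpa [Measure.map_apply hi.measurable MeasurableSet.univ] using this

/-- The countably-many-conditions sets generating the product sigma-algebra. -/
def boxSet {ι : Type*} (t : Finset (ι × ℚ)) : Set (ι → I) := {u | ∀ p ∈ t, (u p.1 : ℝ) ≤ p.2}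

lemma measurableSet_boxSet {ι : Type*} (t : Finset (ι × ℚ)) : MeasurableSet (boxSet t) := by
  have : boxSet t = ⋂ p ∈ t, {u : ι → I | (u p.1 : ℝ) ≤ p.2} := by
    ext u; simp [boxSet]
  rw [this]
  refine Finset.measurableSet_biInter _ fun p _ => measurableSet_le (by fun_prop) measurable_const

lemma generateFrom_boxSet {ι : Type*} :
    (inferInstance : MeasurableSpace (ι → I)) =
      MeasurableSpace.generateFrom (range (boxSet (ι := ι))) := by
  apply le_antisymm
  · refine iSup_le fun i => ?_
    rw [← measurable_iff_comap_le]
    have h1 : Measurable[MeasurableSpace.generateFrom (range (boxSet (ι := ι)))]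
        (fun u : ι → I => (u i : ℝ)) := by
      have h2 : Real.measurableSpace =
          MeasurableSpace.generateFrom (⋃ a : ℚ, {Iic (a : ℝ)}) := by
        rw [← Real.borel_eq_generateFrom_Iic_rat]
        exact BorelSpace.measurable_eq
      rw [h2]
      refine @measurable_generateFrom _ _ (MeasurableSpace.generateFrom (range (boxSet (ι := ι))))
        _ _ ?_
      simp only [iUnion_singleton_eq_range, mem_range, forall_exists_index,
        forall_apply_eq_imp_iff]
      intro q
      refine MeasurableSpace.measurableSet_generateFrom ⟨{(i, q)}, ?_⟩
      ext u
      simp [boxSet]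
    exact h1.subtype_mk
  · refine MeasurableSpace.generateFrom_le ?_
    rintro _ ⟨t, rfl⟩
    exact measurableSet_boxSet t

lemma ae_zero_of_box {ι : Type*} (P : Measure (ι → I)) [IsFiniteMeasure P] (h : (ι → I) → ℂ)
    (hint : Integrable h P) (h0 : ∀ t, ∫ u in boxSet t, h u ∂P = 0) : h =ᵐ[P] 0 := by
  classical
  refine hint.ae_eq_zero_of_forall_setIntegral_eq_zero fun s hs _ => ?_
  have hpi : IsPiSystem (range (boxSet (ι := ι))) := by
    rintro _ ⟨t, rfl⟩ _ ⟨t', rfl⟩ _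
    refine ⟨t ∪ t', ?_⟩
    ext u
    simp only [boxSet, Finset.mem_union, mem_ofPred_eq, mem_inter_iff]
    constructor
    · intro h; exact ⟨fun p hp => h p (.inl hp), fun p hp => h p (.inr hp)⟩
    · rintro ⟨h, h'⟩ p (hp | hp)
      · exact h p hp
      · exact h' p hp
  induction s, hs using MeasurableSpace.induction_on_inter generateFrom_boxSet hpi with
  | empty => simp
  | basic t ht => obtain ⟨t, rfl⟩ := ht; exact h0 t
  | compl t ht ih =>
    have hu : ∫ u, h u ∂P = 0 := by
      have := h0 ∅
      simpa [boxSet] using this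
    have := integral_add_compl ht hint
    rw [ih (measure_lt_top _ _), hu, zero_add] at this
    exact this
  | iUnion f hd hf ih =>
    rw [integral_iUnion hf hd hint.integrableOn]
    simp [fun i => ih i (measure_lt_top _ _)]

/-- The generating vectors. -/
noncomputable def genVec {ι : Type*} (P : Measure (ι → I)) [IsFiniteMeasure P]
    (p : ι × Finset (ι × ℚ)) : Lp ℂ 2 (sigMeas ι P) :=
  indicatorConstLp 2
    ((measurableEmbedding_sigmaMk' p.1).measurableSet_image' (measurableSet_boxSet p.2))
    (by rw [sigMeas_image P p.1 (measurableSet_boxSet p.2)]; exact measure_ne_top _ _) (1 : ℂ)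

lemma genVec_inner {ι : Type*} (P : Measure (ι → I)) [IsFiniteMeasure P]
    (p : ι × Finset (ι × ℚ)) (f : Lp ℂ 2 (sigMeas ι P)) :
    inner ℂ (genVec P p) f = ∫ u in boxSet p.2, f ⟨p.1, u⟩ ∂P := by
  rw [genVec, L2.inner_indicatorConstLp_one, sigMeas_restrict P p.1 (measurableSet_boxSet p.2),
    (measurableEmbedding_sigmaMk' p.1).integral_map]

lemma genVec_total {ι : Type*} (P : Measure (ι → I)) [IsFiniteMeasure P]
    (f : Lp ℂ 2 (sigMeas ι P)) (h : ∀ p, inner ℂ (genVec P p) f = 0) : f = 0 := by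
  apply Lp.ext
  have hm : Measurable (f : (Σ _ : ι, (ι → I)) → ℂ) := (Lp.stronglyMeasurable f).measurable
  have h1 : ∀ᵐ y ∂(sigMeas ι P), f y = 0 := by
    rw [ae_sigMeas P (measurableSet_eq_fun hm measurable_const)]
    intro i
    refine ae_zero_of_box P (fun u => f ⟨i, u⟩) ?_ fun t => ?_
    · have h2 : IntegrableOn f (Sigma.mk i '' univ) (sigMeas ι P) :=
        integrableOn_Lp_of_measure_ne_top f (by norm_num [Fact.out])
          (by rw [sigMeas_image P i MeasurableSet.univ]; exact measure_ne_top _ _)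
      rw [IntegrableOn, sigMeas_restrict P i MeasurableSet.univ, Measure.restrict_univ,
        (measurableEmbedding_sigmaMk' i).integrable_map_iff] at h2
      exact h2
    · rw [← genVec_inner P (i, t) f]; exact h _
  filter_upwards [h1, Lp.coeFn_zero ℂ 2 (sigMeas ι P)] with y h1 h2
  rw [h1, h2]; rfl

lemma genVec_orthonormal {ι : Type*} (P : Measure (ι → I)) [IsProbabilityMeasure P] :
    Orthonormal ℂ (fun i : ι => genVec P (i, ∅)) := by
  classical
  rw [orthonormal_iff_ite]
  intro i j
  rw [genVec_inner]
  have h1 : ∀ᵐ y ∂(sigMeas ι P), (genVec P (j, ∅)) y =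
      (Sigma.mk j '' boxSet (ι := ι) ∅).indicator (fun _ => (1 : ℂ)) y := indicatorConstLp_coeFn
  have hm : Measurable (genVec P (j, ∅)) := (Lp.stronglyMeasurable _).measurable
  have hs := (measurableEmbedding_sigmaMk' j).measurableSet_image' (measurableSet_boxSet (ι := ι) ∅)
  rw [ae_sigMeas P (measurableSet_eq_fun hm (measurable_const.indicator hs))] at h1
  have hu : boxSet (ι := ι) ∅ = univ := by ext; simp [boxSet]
  have h2 := h1 i
  simp only [hu, Measure.restrict_univ] at h2 ⊢
  rw [integral_congr_ae h2]
  by_cases h : i = j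
  · subst h; simp
  · simp [h]

lemma card_hilbertBasis_le {E : Type*} {J S : Type u} [NormedAddCommGroup E]
    [InnerProductSpace ℂ E] [CompleteSpace E] [Infinite S] (b : HilbertBasis J ℂ E) (s : S → E)
    (hs : ∀ x, (∀ i, inner ℂ (s i) x = 0) → x = 0) : Cardinal.mk J ≤ Cardinal.mk S := by
  let N : S → Set J := fun i => {j | inner ℂ (s i) (b j) ≠ 0}
  have hN : ∀ i, (N i).Countable := by
    intro i
    have h1 := (b.summable_inner_mul_inner (s i) (s i)).countable_support
    refine h1.mono fun j hj => ?_
    simp only [Function.mem_support, ne_eq, mul_eq_zero, not_or]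
    exact ⟨hj, fun h => hj (inner_eq_zero_symm.1 h)⟩
  have hU : ⋃ i, N i = univ := by
    refine eq_univ_of_forall fun j => ?_
    by_contra hj
    simp only [N, mem_iUnion, mem_ofPred_eq, not_exists, not_not] at hj
    exact b.orthonormal.ne_zero j (hs _ hj)
  rw [← Cardinal.mk_univ, ← hU]
  calc Cardinal.mk (⋃ i, N i) ≤ Cardinal.mk S * ⨆ i, Cardinal.mk (N i) := Cardinal.mk_iUnion_le _
    _ ≤ Cardinal.mk S * Cardinal.aleph0 := by
        gcongr
        exact ciSup_le' fun i => (hN i).le_aleph0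
    _ = Cardinal.mk S := Cardinal.mul_aleph0_eq (Cardinal.aleph0_le_mk S)

lemma exists_unitary {H : Type*} {ι : Type u} [NormedAddCommGroup H] [InnerProductSpace ℂ H]
    [CompleteSpace H] [Infinite ι] (b : HilbertBasis ι ℂ H) (P : Measure (ι → I))
    [IsProbabilityMeasure P] : Nonempty (Lp ℂ 2 (sigMeas ι P) ≃ₗᵢ[ℂ] H) := by
  classical
  have ho := genVec_orthonormal P
  obtain ⟨w, bw, hw, -⟩ := ho.toSubtypeRange.exists_hilbertBasis_extension
  have h1 : Cardinal.mk w ≤ Cardinal.mk ι := by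
    refine (card_hilbertBasis_le bw (genVec P) (genVec_total P)).trans_eq ?_
    rw [Cardinal.mk_prod, Cardinal.mk_finset_of_infinite, Cardinal.mk_prod]
    simp [Cardinal.mul_aleph0_eq (Cardinal.aleph0_le_mk ι),
      Cardinal.mul_eq_self (Cardinal.aleph0_le_mk ι)]
  have h2 : Cardinal.mk ι ≤ Cardinal.mk w := by
    rw [← Cardinal.mk_range_eq _ ho.linearIndependent.injective]
    exact Cardinal.mk_le_mk_of_subset hw
  obtain ⟨e⟩ := Cardinal.eq.1 (le_antisymm h1 h2)
  have hr : range (bw ∘ e.symm) = range bw := e.symm.surjective.range_comp bw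
  let b' : HilbertBasis ι ℂ (Lp ℂ 2 (sigMeas ι P)) :=
    HilbertBasis.mk (bw.orthonormal.comp e.symm e.symm.injective) (by
      rw [hr, bw.dense_span])
  exact ⟨b'.repr.trans b.repr.symm⟩

/-- Let `H` be an infinite-dimensional complex Hilbert space and
`B(H) = H →L[ℂ] H` the C*-algebra of bounded linear operators on `H` (composition
as multiplication, adjoint as star, operator norm).  Then there exists a weakly
terminal commutative unital closed star-subalgebra `D` of `B(H)`: every commutative
unital closed star-subalgebra `C` of `B(H)` admits an injective unital star-algebra
homomorphism `C → D`. -/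
theorem stmt14 {H : Type u} [NormedAddCommGroup H] [InnerProductSpace ℂ H]
    [CompleteSpace H] (hH : ¬ FiniteDimensional ℂ H) :
    ∃ D : CommSub (H →L[ℂ] H),
      ∀ C : CommSub (H →L[ℂ] H),
        ∃ f : C.sub →⋆ₐ[ℂ] D.sub, Function.Injective f := by
  obtain ⟨w, b, -⟩ := exists_hilbertBasis ℂ H
  have hinf : Infinite w := by
    by_contra hfin
    rw [not_infinite_iff_finite] at hfin
    have := Fintype.ofFinite w
    exact hH b.toOrthonormalBasis.toBasis.finiteDimensional_of_finite
  obtain ⟨lo, wf⟩ := exists_wellOrder w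
  have hcard : Cardinal.mk w = Cardinal.mk (w × ℕ) := by
    rw [Cardinal.mk_prod]
    simp [Cardinal.mul_aleph0_eq (Cardinal.aleph0_le_mk w)]
  obtain ⟨e⟩ := Cardinal.eq.1 hcard
  let P : Measure (w → I) := Measure.infinitePi fun _ : w => (volume : Measure I)
  let m := sigMeas w P
  obtain ⟨U⟩ := exists_unitary b P
  let Ψ := U.conjStarAlgEquiv
  let M : Set (H →L[ℂ] H) := {S | ∃ (F : (Σ _ : w, (w → I)) → ℂ) (T : _), Measurable F ∧
    (∃ K : ℝ, ∀ y, ‖F y‖ ≤ K) ∧ IsMulBy m F T ∧ S = Ψ T}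
  obtain ⟨D, hD⟩ := exists_commSub M
    (by
      rintro _ ⟨F, S, -, -, hS, rfl⟩ _ ⟨G, T, -, -, hT, rfl⟩
      rw [← map_mul, ← map_mul, (hS.mul hT).congr (hT.mul hS)
        (Filter.Eventually.of_forall fun y => mul_comm _ _)])
    (by
      rintro _ ⟨F, S, hF, ⟨K, hK⟩, hS, rfl⟩
      have hF' : Measurable fun y => star (F y) := continuous_star.measurable.comp hF
      have hK' : ∀ y, ‖star (F y)‖ ≤ K := fun y => by rw [norm_star]; exact hK y
      obtain ⟨T, hT⟩ := exists_mulOp m _ hF' K hK'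
      refine ⟨_, T, hF', ⟨K, hK'⟩, hT, ?_⟩
      rw [← map_star, hS.star_eq hT])
  refine ⟨D, fun C => ?_⟩
  have hclosed : IsClosed (C.sub : Set (H →L[ℂ] H)) := C.closed
  let i0 : CStarAlgebra C.sub := StarSubalgebra.cstarAlgebra C.sub
  let i1 : CommCStarAlgebra C.sub :=
    { i0 with mul_comm := fun x y => Subtype.ext (C.comm x.1 x.2 y.1 y.2) }
  have hs := fun j : w => exists_sample (A := C.sub) C.sub.subtype (b j) (b.orthonormal.1 j) b e
  choose F0 hm hbd h1 hadd hmul hsmul hstar hinj using hs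
  let F : C.sub → (Σ _ : w, (w → I)) → ℂ := fun c y => F0 y.1 c y.2
  have hFm : ∀ c, Measurable (F c) := fun c => measurable_sigma' fun i => hm i c
  have hFb : ∀ c y, ‖F c y‖ ≤ ‖c‖ := fun c y => hbd y.1 c y.2
  choose T hT using fun c => exists_mulOp m (F c) (hFm c) ‖c‖ (hFb c)
  have hT' : ∀ c, IsMulBy m (F c) (T c) := hT
  have T1 : T 1 = 1 := (hT' 1).congr IsMulBy.one
    ((ae_sigMeas P (measurableSet_eq_fun (hFm _) measurable_const)).2 h1)
  have Tadd : ∀ c d, T (c + d) = T c + T d := fun c d => (hT' _).congr ((hT' c).add (hT' d))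
    ((ae_sigMeas P (measurableSet_eq_fun (hFm _) ((hFm c).add (hFm d)))).2 fun i => hadd i c d)
  have Tmul : ∀ c d, T (c * d) = T c * T d := fun c d => (hT' _).congr ((hT' c).mul (hT' d))
    ((ae_sigMeas P (measurableSet_eq_fun (hFm _) ((hFm c).mul (hFm d)))).2 fun i => hmul i c d)
  have Tsmul : ∀ (r : ℂ) c, T (r • c) = r • T c := fun r c => (hT' _).congr ((hT' c).smul r)
    ((ae_sigMeas P (measurableSet_eq_fun (hFm _) ((hFm c).const_mul r))).2 fun i => hsmul i r c)
  have Tstar : ∀ c, T (star c) = star (T c) := fun c => by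
    symm
    refine (hT' c).star_eq fun f => ?_
    have h := (ae_sigMeas P (measurableSet_eq_fun (hFm (star c))
      (continuous_star.measurable.comp (hFm c)))).2 fun i => hstar i c
    filter_upwards [hT' (star c) f, h] with y h2 h3
    rw [h2, h3]; rfl
  have Tinj : ∀ c, T c = 0 → c = 0 := by
    intro c hc
    have hz : ∀ j, (c : H →L[ℂ] H) (b j) = 0 := by
      intro j
      refine hinj j c ?_
      have h2 := hT' c (genVec P (j, ∅))
      rw [hc] at h2
      have h3 : ∀ᵐ y ∂m, (genVec P (j, ∅)) y =
        (Sigma.mk j '' boxSet (ι := w) ∅).indicator (fun _ => (1 : ℂ)) y := indicatorConstLp_coeFn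
      have hs := (measurableEmbedding_sigmaMk' j).measurableSet_image'
        (measurableSet_boxSet (ι := w) ∅)
      have h4 : ∀ᵐ y ∂m, F c y *
          (Sigma.mk j '' boxSet (ι := w) ∅).indicator (fun _ => (1 : ℂ)) y = 0 := by
        filter_upwards [h2, h3, Lp.coeFn_zero ℂ 2 m] with y h2 h3 h5
        rw [← h3, ← h2]
        exact h5
      have h5 := (ae_sigMeas P (measurableSet_eq_fun
        ((hFm c).mul (measurable_const.indicator hs)) measurable_const)).1 h4 j
      filter_upwards [h5] with u hu
      have hmem : (⟨j, u⟩ : Σ _ : w, (w → I)) ∈ Sigma.mk j '' boxSet (ι := w) ∅ :=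
        ⟨u, by simp [boxSet], rfl⟩
      rw [Pi.mul_apply, indicator_of_mem hmem, mul_one] at hu
      exact hu
    apply Subtype.ext
    have hcl : IsClosed ((LinearMap.ker (c : H →L[ℂ] H).toLinearMap : Submodule ℂ H) : Set H) :=
      (c : H →L[ℂ] H).isClosed_ker
    have hle : (Submodule.span ℂ (range b)).topologicalClosure ≤
        LinearMap.ker (c : H →L[ℂ] H).toLinearMap := by
      refine Submodule.topologicalClosure_minimal _ ?_ hcl
      rw [Submodule.span_le]
      rintro _ ⟨j, rfl⟩
      exact hz j
    rw [b.dense_span] at hle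
    ext x
    exact hle (x := x) trivial
  have hmemD : ∀ c, Ψ (T c) ∈ D.sub := fun c =>
    hD ⟨F c, T c, hFm c, ⟨‖c‖, hFb c⟩, hT' c, rfl⟩
  let f : C.sub →⋆ₐ[ℂ] D.sub :=
    { toFun := fun c => ⟨Ψ (T c), hmemD c⟩
      map_one' := Subtype.ext (by simp [T1])
      map_mul' := fun c d => Subtype.ext (by simp [Tmul])
      map_zero' := Subtype.ext (by
        have : T 0 = 0 := by simpa using Tsmul 0 0
        simp [this])
      map_add' := fun c d => Subtype.ext (by simp [Tadd])
      commutes' := fun r => Subtype.ext (by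
        have h2 : T (algebraMap ℂ C.sub r) = algebraMap ℂ _ r := by
          rw [Algebra.algebraMap_eq_smul_one, Algebra.algebraMap_eq_smul_one, ← T1]
          exact Tsmul r 1
        change Ψ (T (algebraMap ℂ C.sub r)) = algebraMap ℂ (H →L[ℂ] H) r
        rw [h2]
        exact AlgHomClass.commutes Ψ r)
      map_star' := fun c => Subtype.ext (by
        change Ψ (T (star c)) = star (Ψ (T c))
        rw [Tstar, map_star]) }
  refine ⟨f, (injective_iff_map_eq_zero f).2 fun c hc => Tinj c ?_⟩
  have h2 : Ψ (T c) = 0 := congrArg Subtype.val hc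
  exact (map_eq_zero_iff Ψ Ψ.injective).1 h2
end
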